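/- arXiv:2512.02149 — 8 statements merged into one kernel-verified Lean document; each statement's English description precedes it below -/
import Mathlib

section
/- Let k ≥ 1 and let x ∈ R^k be nonzero with valuation ν(x) = j. Then x·v ∈ ⟨γ^j⟩ for every v ∈ R^k, and for every a ∈ ⟨γ^j⟩ the number of v ∈ R^k with x·v = a equals q^(j+s(k−1)). In particular every nonzero codeword of S_k^α takes each value of the ideal ⟨γ^j⟩ equally often, namely q^(j+s(k−1)) times. -/
/-!
The map `v ↦ x·v` is linear with image the ideal generated by the coordinates of `x`. Its nonempty
fibers are cosets of its kernel, so all have the same size `|R| ^ k / |image|`. Some coordinate of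
`x` is a unit times `γ ^ j`, so the image is `⟨γ ^ j⟩`; and since multiplication by `γ ^ i` induces
an isomorphism `R/⟨γ⟩ ≃ ⟨γ ^ i⟩/⟨γ ^ (i + 1)⟩` as long as `γ ^ i ≠ 0`, the ideal `⟨γ ^ j⟩` has
index `q ^ j` for `j ≤ s`. In particular `|R| = q ^ s`.
-/

open Ideal IsLocalRing

theorem card_addMonoidHom_fiber_mul_card_range {G H : Type*} [AddGroup G] [AddGroup H]
    (f : G →+ H) {a : H} (ha : a ∈ f.range) :
    Nat.card {v // f v = a} * Nat.card f.range = Nat.card G := by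
  obtain ⟨v, rfl⟩ := ha
  have hfiber : Nat.card {w // f w = f v} = Nat.card f.ker := Nat.card_congr (f.fiberEquivKer v)
  rw [hfiber, ← AddSubgroup.index_ker, AddSubgroup.card_mul_index]

theorem nilpotencyClass_eq_of_pow_pred_ne_zero {M : Type*} [MonoidWithZero M] [Nontrivial M]
    {a : M} {s : ℕ} (hs : 1 ≤ s) (hpow : a ^ s = 0) (hpred : 2 ≤ s → a ^ (s - 1) ≠ 0) :
    nilpotencyClass a = s := by
  obtain ⟨n, rfl⟩ := Nat.exists_eq_add_of_le' hs
  refine nilpotencyClass_eq_succ_iff.mpr ⟨hpow, ?_⟩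
  rcases n.eq_zero_or_pos with rfl | hn
  · rw [pow_zero]
    exact one_ne_zero
  · exact hpred (Nat.succ_le_succ hn)

section CommRing

variable {R : Type*} [CommRing R]

theorem card_dotProduct_fiber [Finite R] {ι : Type*} [Fintype ι] [Nonempty ι] (x : ι → R) {a : R}
    (ha : a ∈ span (Set.range x)) :
    Nat.card {v : ι → R // x ⬝ᵥ v = a} =
      Nat.card (R ⧸ span (Set.range x)) * Nat.card R ^ (Fintype.card ι - 1) := by
  set I : Ideal R := span (Set.range x)
  let f : (ι → R) →ₗ[R] R := Fintype.linearCombination R x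
  have hf : ∀ v, f v = x ⬝ᵥ v := fun v => by
    simp only [f, Fintype.linearCombination_apply, smul_eq_mul, dotProduct, mul_comm]
  have hrange : f.range = I := Fintype.range_linearCombination R x
  have hfiber : Nat.card {v // x ⬝ᵥ v = a} * Nat.card I = Nat.card (ι → R) := by
    simp only [← hf, ← hrange] at ha ⊢
    exact card_addMonoidHom_fiber_mul_card_range f.toAddMonoidHom ha
  refine Nat.eq_of_mul_eq_mul_right (Nat.card_pos (α := I)) ?_
  calc Nat.card {v // x ⬝ᵥ v = a} * Nat.card I
      = Nat.card R ^ Fintype.card ι := by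
        rw [hfiber, Nat.card_fun, Nat.card_eq_fintype_card (α := ι)]
    _ = Nat.card R * Nat.card R ^ (Fintype.card ι - 1) :=
        (mul_pow_sub_one Fintype.card_ne_zero _).symm
    _ = Nat.card (R ⧸ I) * Nat.card R ^ (Fintype.card ι - 1) * Nat.card I := by
        nth_rw 1 [Submodule.card_eq_card_quotient_mul_card I]
        ring

theorem card_quotient_span_mul {c d : R} (h : ∀ r, c * d ∣ c * r → d ∣ r) :
    Nat.card (R ⧸ span {c * d}) = Nat.card (R ⧸ span {d}) * Nat.card (R ⧸ span {c}) := by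
  let f : R →ₗ[R] R ⧸ span {c * d} := (span {c * d}).mkQ ∘ₗ LinearMap.mulLeft R c
  have hker : f.ker = span {d} := by
    ext r
    have hmem : r ∈ f.ker ↔ c * d ∣ c * r :=
      (Submodule.Quotient.mk_eq_zero _).trans mem_span_singleton
    rw [hmem, mem_span_singleton]
    exact ⟨h r, mul_dvd_mul_left c⟩
  have hrange : f.range = Submodule.map (span {c * d}).mkQ (span {c}) := by
    rw [LinearMap.range_comp]
    congr 1
    ext r
    simp only [LinearMap.mem_range, LinearMap.mulLeft_apply, mem_span_singleton, dvd_def, eq_comm]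
  rw [← Submodule.card_quotient_mul_card_quotient (span {c}) (span {c * d})
    (span_singleton_le_span_singleton.mpr (dvd_mul_right c d)), ← hrange, ← hker,
    Nat.card_congr f.quotKerEquivRange.toEquiv]

variable [IsLocalRing R] {γ : R}

theorem uniformizer_dvd_iff_not_isUnit (hγ : maximalIdeal R = span {γ}) {r : R} :
    γ ∣ r ↔ ¬IsUnit r := by
  rw [← mem_span_singleton, ← hγ, mem_maximalIdeal, mem_nonunits_iff]

theorem dvd_of_mul_dvd_mul_left_of_ne_zero (hγ : maximalIdeal R = span {γ}) {c r : R}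
    (hc : c ≠ 0) (hr : c * γ ∣ c * r) : γ ∣ r := by
  obtain ⟨t, ht⟩ := hr
  have hzero : c * (r - γ * t) = 0 := by rw [mul_sub, ht, mul_assoc, sub_self]
  have hdvd : γ ∣ r - γ * t :=
    (uniformizer_dvd_iff_not_isUnit hγ).mpr fun hunit => hc (hunit.mul_left_eq_zero.mp hzero)
  exact (dvd_sub_left (dvd_mul_right γ t)).mp hdvd

theorem card_quotient_span_pow (hγ : maximalIdeal R = span {γ}) {j : ℕ}
    (hj : ∀ i < j, γ ^ i ≠ 0) :
    Nat.card (R ⧸ span {γ ^ j}) = Nat.card (R ⧸ span {γ}) ^ j := by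
  induction j with
  | zero => simp
  | succ j ih =>
    have hcancel : ∀ r, γ ^ j * γ ∣ γ ^ j * r → γ ∣ r := fun _ =>
      dvd_of_mul_dvd_mul_left_of_ne_zero hγ (hj j j.lt_succ_self)
    rw [pow_succ, card_quotient_span_mul hcancel, ih fun i hi => hj i (hi.trans j.lt_succ_self),
      pow_succ']

theorem card_eq_pow_nilpotencyClass (hγ : maximalIdeal R = span {γ}) (hnil : IsNilpotent γ) :
    Nat.card R = Nat.card (R ⧸ span {γ}) ^ nilpotencyClass γ := by
  have hpow : ∀ i < nilpotencyClass γ, γ ^ i ≠ 0 := fun _ hi => Nat.notMem_of_lt_sInf hi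
  rw [← card_quotient_span_pow hγ hpow, pow_nilpotencyClass hnil, span_singleton_zero]
  exact Nat.card_congr (RingEquiv.quotientBot R).symm.toEquiv

theorem dvd_of_dvd_of_not_mul_dvd (hγ : maximalIdeal R = span {γ}) {c y : R} (hy : c ∣ y)
    (hy' : ¬c * γ ∣ y) : y ∣ c := by
  obtain ⟨u, rfl⟩ := hy
  have hu : ¬γ ∣ u := fun h => hy' (mul_dvd_mul_left c h)
  rw [uniformizer_dvd_iff_not_isUnit hγ, not_not] at hu
  exact hu.mul_right_dvd.mpr dvd_rfl

theorem span_range_eq_span_singleton (hγ : maximalIdeal R = span {γ}) {ι : Sort*} {x : ι → R}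
    {c : R} (hx : ∀ i, c ∣ x i) (hx' : ∃ i, ¬c * γ ∣ x i) : span (Set.range x) = span {c} := by
  obtain ⟨i, hi⟩ := hx'
  apply le_antisymm
  · exact span_le.mpr (Set.range_subset_iff.mpr fun i => mem_span_singleton.mpr (hx i))
  · rw [span_singleton_le_iff_mem]
    exact mem_of_dvd _ (dvd_of_dvd_of_not_mul_dvd hγ (hx i) hi)
      (subset_span (Set.mem_range_self i))

end CommRing

theorem stmt_1_general {R ι : Type*} [CommRing R] [IsLocalRing R] [Finite R] [Fintype ι] {γ : R}
    (hγ : maximalIdeal R = span {γ}) {j : ℕ} {x : ι → R}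
    (hx : ∀ i, γ ^ j ∣ x i) (hx' : ∃ i, ¬γ ^ (j + 1) ∣ x i) :
    (∀ v, γ ^ j ∣ x ⬝ᵥ v) ∧ ∀ a, γ ^ j ∣ a → Nat.card {v // x ⬝ᵥ v = a} =
      Nat.card (R ⧸ span {γ}) ^ (j + nilpotencyClass γ * (Fintype.card ι - 1)) := by
  refine ⟨fun v => Finset.dvd_sum fun i _ => (hx i).mul_right _, fun a ha => ?_⟩
  have hspan : span (Set.range x) = span {γ ^ j} :=
    span_range_eq_span_singleton hγ hx (by simpa only [pow_succ] using hx')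
  have hnil : IsNilpotent γ := by
    rw [Ring.KrullDimLE.isNilpotent_iff_mem_maximalIdeal, hγ]
    exact mem_span_singleton_self γ
  obtain ⟨i, hi⟩ := hx'
  have : Nonempty ι := ⟨i⟩
  have hpow : γ ^ j ≠ 0 := fun h => hi (by simpa [pow_succ, h] using hx i)
  rw [card_dotProduct_fiber x (hspan ▸ mem_span_singleton.mpr ha), hspan,
    card_quotient_span_pow hγ fun i hij h => hpow (pow_eq_zero_of_le hij.le h),
    card_eq_pow_nilpotencyClass hγ hnil, ← pow_mul, ← pow_add]

/-- If `x ∈ R^k` is nonzero with valuation `ν(x) = j`, then `x·v ∈ ⟨γ^j⟩` for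
all `v`, and for every `a ∈ ⟨γ^j⟩` the number of `v ∈ R^k` with `x·v = a` is
`q^(j+s(k−1))`. -/
theorem stmt_1
    (R : Type) [CommRing R] [IsLocalRing R] [Fintype R]
    (γ : R) (s q : ℕ)
    (hs : 1 ≤ s)
    (hmax : IsLocalRing.maximalIdeal R = Ideal.span {γ})
    (hnil : γ ^ s = 0)
    (hnil' : 2 ≤ s → γ ^ (s - 1) ≠ 0)
    (hq : Nat.card (R ⧸ Ideal.span ({γ} : Set R)) = q)
    (k : ℕ) (hk : 1 ≤ k)
    (j : ℕ) (hj : j < s)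
    (x : Fin k → R) (hx : x ≠ 0)
    (hval1 : ∀ i, x i ∈ Ideal.span ({γ ^ j} : Set R))
    (hval2 : ∃ i, x i ∉ Ideal.span ({γ ^ (j + 1)} : Set R)) :
    (∀ v : Fin k → R, (∑ i, x i * v i) ∈ Ideal.span ({γ ^ j} : Set R)) ∧
    (∀ a ∈ Ideal.span ({γ ^ j} : Set R),
      Nat.card {v : Fin k → R // ∑ i, x i * v i = a} = q ^ (j + s * (k - 1))) := by
  have hclass : nilpotencyClass γ = s := nilpotencyClass_eq_of_pow_pred_ne_zero hs hnil hnil'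
  simp only [mem_span_singleton] at hval1 hval2 ⊢
  simpa only [hq, hclass, Fintype.card_fin, dotProduct] using stmt_1_general hmax hval1 hval2
end

section
/- Let k ≥ 1 and let x ∈ R^k be nonzero with valuation ν(x) = j. Then the Hamming weight of the codeword (x·v)_{v∈R^k} of S_k^α, i.e. the number of v ∈ R^k with x·v ≠ 0, equals q^(sk) − q^(j+s(k−1)). -/
/-!
The map `v ↦ x·v` is a homomorphism onto the ideal generated by the coordinates of `x`, and for
`ν(x) = j` this ideal is `⟨γ^j⟩`. Multiplication by `γ^i` carries `R` onto `⟨γ^i⟩` and `⟨γ⟩` onto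
`⟨γ^(i+1)⟩`; its kernel lies in `⟨γ⟩` as long as `γ^i ≠ 0`, so each quotient `⟨γ^i⟩ / ⟨γ^(i+1)⟩` has
as many elements as the residue field. Hence `|⟨γ^j⟩| = q^(s-j)`, and the kernel of `v ↦ x·v` has
`q^(sk) / q^(s-j)` elements.
-/

theorem nilpotencyClass_eq_of_pow_eq_zero {M : Type*} [MonoidWithZero M] [Nontrivial M] {a : M}
    {s : ℕ} (hzero : a ^ s = 0) (hne : 2 ≤ s → a ^ (s - 1) ≠ 0) : nilpotencyClass a = s := by
  match s with
  | 0 => simp at hzero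
  | 1 => exact nilpotencyClass_eq_succ_iff.mpr ⟨hzero, by simp⟩
  | t + 2 => exact nilpotencyClass_eq_succ_iff.mpr ⟨hzero, hne (Nat.le_add_left 2 t)⟩

section CommRing

variable {R : Type*} [CommRing R]

theorem card_span_singleton_mul_mul_card_quotient {a : R} {I : Ideal R}
    (h : Ideal.torsionOf R R a ≤ I) :
    Nat.card ↥(Ideal.span {a} * I) * Nat.card (R ⧸ I) = Nat.card (Ideal.span {a}) := by
  let f := AddMonoidHom.mulLeft a
  have hker : f.ker ≤ I.toAddSubgroup := fun r (hr : a * r = 0) ↦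
    h ((Ideal.mem_torsionOf_iff a r).mpr (by rwa [smul_eq_mul, mul_comm]))
  have hmap : I.toAddSubgroup.map f = (Ideal.span {a} * I).toAddSubgroup := by
    ext y
    exact Ideal.mem_span_singleton_mul.symm
  have hrange : f.range = (Ideal.span {a}).toAddSubgroup := by
    ext y
    simp [f, Ideal.mem_span_singleton', mul_comm]
  calc Nat.card ↥(Ideal.span {a} * I) * Nat.card (R ⧸ I)
      = Nat.card (I.toAddSubgroup.map f) * I.toAddSubgroup.index := by rw [hmap]; rfl
    _ = f.ker.index := by rw [← AddSubgroup.relIndex_ker, AddSubgroup.relIndex_mul_index hker]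
    _ = Nat.card (Ideal.span {a}) := by rw [AddSubgroup.index_ker, hrange]; rfl

theorem card_ker_linearCombination_mul_card_span_range {ι M : Type*} [Fintype ι] [AddCommGroup M]
    [Module R M] (x : ι → M) :
    Nat.card (Fintype.linearCombination R x).ker * Nat.card (Submodule.span R (Set.range x)) =
      Nat.card R ^ Fintype.card ι := by
  let f := (Fintype.linearCombination R x).toAddMonoidHom
  calc Nat.card (Fintype.linearCombination R x).ker * Nat.card (Submodule.span R (Set.range x))
      = Nat.card f.ker * Nat.card f.range := by rw [← Fintype.range_linearCombination]; rfl
    _ = Nat.card (ι → R) := by rw [← AddSubgroup.index_ker, AddSubgroup.card_mul_index]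
    _ = Nat.card R ^ Fintype.card ι := by rw [Nat.card_fun, Nat.card_eq_fintype_card (α := ι)]

theorem lt_nilpotencyClass_of_mem_of_notMem {γ y : R} {j : ℕ} (hγ : IsNilpotent γ)
    (hmem : y ∈ Ideal.span {γ ^ j}) (hnot : y ∉ Ideal.span {γ ^ (j + 1)}) :
    j < nilpotencyClass γ := by
  by_contra! hle
  have hpow : γ ^ j = 0 := pow_eq_zero_of_le hle (pow_nilpotencyClass hγ)
  have hy : y = 0 := by simpa [hpow] using hmem
  exact hnot (hy ▸ zero_mem _)

end CommRing

section IsLocalRing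

variable {R : Type*} [CommRing R] [IsLocalRing R] {γ : R}

theorem isNilpotent_of_maximalIdeal_eq_span_singleton [Ring.KrullDimLE 0 R]
    (hmax : IsLocalRing.maximalIdeal R = Ideal.span {γ}) : IsNilpotent γ :=
  Ring.KrullDimLE.isNilpotent_iff_mem_maximalIdeal.mpr
    (hmax ▸ Ideal.mem_span_singleton_self γ)

theorem card_span_singleton_pow (hmax : IsLocalRing.maximalIdeal R = Ideal.span {γ})
    (hγ : IsNilpotent γ) {i : ℕ} (hi : i ≤ nilpotencyClass γ) :
    Nat.card (Ideal.span {γ ^ i}) = Nat.card (R ⧸ Ideal.span {γ}) ^ (nilpotencyClass γ - i) := by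
  induction hi using Nat.decreasingInduction with
  | self => simp [pow_nilpotencyClass hγ]
  | of_succ i hi ih =>
    have hpow : γ ^ i ≠ 0 := Nat.notMem_of_lt_sInf hi
    have htorsion : Ideal.torsionOf R R (γ ^ i) ≤ Ideal.span {γ} :=
      hmax ▸ IsLocalRing.le_maximalIdeal (mt (Ideal.torsionOf_eq_top_iff _ _).mp hpow)
    rw [← card_span_singleton_mul_mul_card_quotient htorsion,
      Ideal.span_singleton_mul_span_singleton, ← pow_succ, ih, ← pow_succ]
    congr 1
    omega

theorem card_eq_card_quotient_pow_nilpotencyClass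
    (hmax : IsLocalRing.maximalIdeal R = Ideal.span {γ}) (hγ : IsNilpotent γ) :
    Nat.card R = Nat.card (R ⧸ Ideal.span {γ}) ^ nilpotencyClass γ := by
  simpa using card_span_singleton_pow hmax hγ (Nat.zero_le _)

theorem eq_span_singleton_pow_of_le_of_not_le
    (hmax : IsLocalRing.maximalIdeal R = Ideal.span {γ}) {I : Ideal R} {j : ℕ}
    (hle : I ≤ Ideal.span {γ ^ j}) (hnot : ¬ I ≤ Ideal.span {γ ^ (j + 1)}) :
    I = Ideal.span {γ ^ j} := by
  obtain ⟨y, hyI, hy⟩ := SetLike.not_le_iff_exists.mp hnot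
  obtain ⟨a, rfl⟩ := Ideal.mem_span_singleton'.mp (hle hyI)
  have ha : IsUnit a := by
    rw [← IsLocalRing.notMem_maximalIdeal, hmax, Ideal.mem_span_singleton]
    intro hdvd
    rw [Ideal.mem_span_singleton, pow_succ'] at hy
    exact hy (mul_dvd_mul_right hdvd _)
  refine le_antisymm hle ((Ideal.span_singleton_le_iff_mem I).mpr ?_)
  exact (I.unit_mul_mem_iff_mem ha).mp hyI

theorem span_range_eq_span_singleton_pow {ι : Type*} {x : ι → R} {j : ℕ}
    (hmax : IsLocalRing.maximalIdeal R = Ideal.span {γ})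
    (hmem : ∀ i, x i ∈ Ideal.span {γ ^ j}) (hnot : ∃ i, x i ∉ Ideal.span {γ ^ (j + 1)}) :
    Ideal.span (Set.range x) = Ideal.span {γ ^ j} := by
  obtain ⟨i, hi⟩ := hnot
  exact eq_span_singleton_pow_of_le_of_not_le hmax
    (Ideal.span_le.mpr (Set.range_subset_iff.mpr hmem))
    fun hle ↦ hi (hle (Ideal.subset_span (Set.mem_range_self i)))

variable {ι : Type*} [Fintype ι] {x : ι → R} {j : ℕ}

theorem card_sum_mul_eq_zero [Finite R] (hmax : IsLocalRing.maximalIdeal R = Ideal.span {γ})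
    (hmem : ∀ i, x i ∈ Ideal.span {γ ^ j}) (hnot : ∃ i, x i ∉ Ideal.span {γ ^ (j + 1)}) :
    Nat.card {v : ι → R // ∑ i, x i * v i = 0} =
      Nat.card (R ⧸ Ideal.span {γ}) ^ (j + nilpotencyClass γ * (Fintype.card ι - 1)) := by
  set q := Nat.card (R ⧸ Ideal.span {γ})
  set s := nilpotencyClass γ
  obtain ⟨i₀, hi₀⟩ := hnot
  have hγ : IsNilpotent γ := isNilpotent_of_maximalIdeal_eq_span_singleton hmax
  have hj : j < s := lt_nilpotencyClass_of_mem_of_notMem hγ (hmem i₀) hi₀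
  have hspan : Ideal.span (Set.range x) = Ideal.span {γ ^ j} :=
    span_range_eq_span_singleton_pow hmax hmem ⟨i₀, hi₀⟩
  have hker : Nat.card {v : ι → R // ∑ i, x i * v i = 0} =
      Nat.card (Fintype.linearCombination R x).ker :=
    Nat.card_congr (Equiv.subtypeEquivRight fun v ↦ by
      simp [Fintype.linearCombination_apply, mul_comm])
  have hexp : s * Fintype.card ι = j + s * (Fintype.card ι - 1) + (s - j) := by
    have hι : 0 < Fintype.card ι := Fintype.card_pos_iff.mpr ⟨i₀⟩
    have := Nat.mul_sub_one s (Fintype.card ι)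
    have := Nat.le_mul_of_pos_right s hι
    omega
  have hq : 0 < q := ((finite_iff_ideal_quotient (Ideal.span {γ})).mp ‹_›).2.card_pos
  apply Nat.eq_of_mul_eq_mul_right (pow_pos hq (s - j))
  calc Nat.card {v : ι → R // ∑ i, x i * v i = 0} * q ^ (s - j)
      = Nat.card (Fintype.linearCombination R x).ker * Nat.card (Ideal.span (Set.range x)) := by
        rw [hker, hspan, card_span_singleton_pow hmax hγ hj.le]
    _ = Nat.card R ^ Fintype.card ι := card_ker_linearCombination_mul_card_span_range x
    _ = q ^ (j + s * (Fintype.card ι - 1)) * q ^ (s - j) := by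
        rw [card_eq_card_quotient_pow_nilpotencyClass hmax hγ, ← pow_mul, hexp, pow_add]

theorem stmt_2_general [Finite R] (hmax : IsLocalRing.maximalIdeal R = Ideal.span {γ})
    (hmem : ∀ i, x i ∈ Ideal.span {γ ^ j}) (hnot : ∃ i, x i ∉ Ideal.span {γ ^ (j + 1)}) :
    Nat.card {v : ι → R // ∑ i, x i * v i ≠ 0} =
      Nat.card (R ⧸ Ideal.span {γ}) ^ (nilpotencyClass γ * Fintype.card ι) -
        Nat.card (R ⧸ Ideal.span {γ}) ^ (j + nilpotencyClass γ * (Fintype.card ι - 1)) := by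
  have hcard : Nat.card (ι → R) =
      Nat.card (R ⧸ Ideal.span {γ}) ^ (nilpotencyClass γ * Fintype.card ι) := by
    rw [Nat.card_fun, pow_mul, Nat.card_eq_fintype_card (α := ι),
      card_eq_card_quotient_pow_nilpotencyClass hmax
        (isNilpotent_of_maximalIdeal_eq_span_singleton hmax)]
  rw [← hcard, ← card_sum_mul_eq_zero hmax hmem hnot]
  exact Set.ncard_compl {v : ι → R | ∑ i, x i * v i = 0}

end IsLocalRing

/-- If `x ∈ R^k` is nonzero with valuation `ν(x) = j`, then the Hamming weight
of the codeword `(x·v)_{v∈R^k}` of `S_k^α` equals `q^(sk) − q^(j+s(k−1))`. -/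
theorem stmt_2
    (R : Type) [CommRing R] [IsLocalRing R] [Fintype R]
    (γ : R) (s q : ℕ)
    (hs : 1 ≤ s)
    (hmax : IsLocalRing.maximalIdeal R = Ideal.span {γ})
    (hnil : γ ^ s = 0)
    (hnil' : 2 ≤ s → γ ^ (s - 1) ≠ 0)
    (hq : Nat.card (R ⧸ Ideal.span ({γ} : Set R)) = q)
    (k : ℕ) (hk : 1 ≤ k)
    (j : ℕ) (hj : j < s)
    (x : Fin k → R) (hx : x ≠ 0)
    (hval1 : ∀ i, x i ∈ Ideal.span ({γ ^ j} : Set R))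
    (hval2 : ∃ i, x i ∉ Ideal.span ({γ ^ (j + 1)} : Set R)) :
    Nat.card {v : Fin k → R // ∑ i, x i * v i ≠ 0}
      = q ^ (s * k) - q ^ (j + s * (k - 1)) := by
  have hγ : nilpotencyClass γ = s := nilpotencyClass_eq_of_pow_eq_zero hnil hnil'
  simpa only [hγ, hq, Fintype.card_fin] using stmt_2_general hmax hval1 hval2
end

section
/- Let n, k ≥ 1 and let u_1, …, u_k ∈ R^n be such that the only α ∈ R^k with ∑_{i=1}^k α_i u_i = 0 is α = 0 (i.e. u_1, …, u_k generate a free code of rank k). Then for every nonzero α ∈ R^k, writing j = min_i ν(α_i) (the minimum taken over the nonzero α_i), the codeword c = ∑_{i=1}^k α_i u_i satisfies: every coordinate of c lies in ⟨γ^j⟩, and some coordinate of c lies outside ⟨γ^(j+1)⟩; that is, ν(c) = min_i ν(α_i). -/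
/-!
Over a chain ring divisibility by a power of `γ` is an annihilation condition: if `γ` has
nilpotency index `s`, then `γ ^ j ∣ x` exactly when `γ ^ (s - j) * x = 0`. Injective linear maps
preserve and reflect annihilation, hence also divisibility by each `γ ^ j`, that is, the valuation.
The map to consider is `α ↦ ∑ i, α i • u i`, which is injective because the `u i` are independent.
-/

section ChainRing

variable {R : Type*} [CommRing R] [IsLocalRing R] {γ : R}

theorem dvd_of_pow_pred_nilpotencyClass_mul_eq_zero
    (hmax : IsLocalRing.maximalIdeal R = Ideal.span {γ}) (hγ : IsNilpotent γ) {x : R}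
    (hx : γ ^ (nilpotencyClass γ - 1) * x = 0) : γ ∣ x := by
  have x_not_unit : ¬IsUnit x := fun hunit =>
    pow_pred_nilpotencyClass hγ (hunit.mul_left_eq_zero.1 hx)
  rwa [← Ideal.mem_span_singleton, ← hmax, IsLocalRing.mem_maximalIdeal]

theorem pow_dvd_of_pow_nilpotencyClass_sub_mul_eq_zero
    (hmax : IsLocalRing.maximalIdeal R = Ideal.span {γ}) (hγ : IsNilpotent γ) {j : ℕ} {x : R}
    (hx : γ ^ (nilpotencyClass γ - j) * x = 0) : γ ^ j ∣ x := by
  induction j with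
  | zero => simp
  | succ j ih =>
    obtain hle | hlt := le_or_gt (nilpotencyClass γ) j
    · have x_eq_zero : x = 0 := by
        simpa only [Nat.sub_eq_zero_of_le (hle.trans j.le_succ), pow_zero, one_mul] using hx
      exact x_eq_zero ▸ dvd_zero _
    · have hx_pred : γ ^ (nilpotencyClass γ - j) * x = 0 := by
        rw [show nilpotencyClass γ - j = nilpotencyClass γ - (j + 1) + 1 by lia, pow_succ',
          mul_assoc, hx, mul_zero]
      obtain ⟨y, rfl⟩ := ih hx_pred
      have hy : γ ^ (nilpotencyClass γ - 1) * y = 0 := by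
        rwa [← mul_assoc, ← pow_add,
          show nilpotencyClass γ - (j + 1) + j = nilpotencyClass γ - 1 by lia] at hx
      rw [pow_succ]
      exact mul_dvd_mul_left _ (dvd_of_pow_pred_nilpotencyClass_mul_eq_zero hmax hγ hy)

theorem pow_dvd_iff_pow_nilpotencyClass_sub_mul_eq_zero
    (hmax : IsLocalRing.maximalIdeal R = Ideal.span {γ}) (hγ : IsNilpotent γ) {j : ℕ} {x : R} :
    γ ^ j ∣ x ↔ γ ^ (nilpotencyClass γ - j) * x = 0 := by
  refine ⟨?_, pow_dvd_of_pow_nilpotencyClass_sub_mul_eq_zero hmax hγ⟩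
  rintro ⟨y, rfl⟩
  rw [← mul_assoc, ← pow_add, pow_eq_zero_of_le le_tsub_add (pow_nilpotencyClass hγ), zero_mul]

theorem forall_pow_dvd_iff_pow_nilpotencyClass_sub_smul_eq_zero
    (hmax : IsLocalRing.maximalIdeal R = Ideal.span {γ}) (hγ : IsNilpotent γ) {ι : Type*} {j : ℕ}
    {x : ι → R} :
    (∀ i, γ ^ j ∣ x i) ↔ γ ^ (nilpotencyClass γ - j) • x = 0 := by
  simp only [funext_iff, Pi.smul_apply, smul_eq_mul, Pi.zero_apply,
    pow_dvd_iff_pow_nilpotencyClass_sub_mul_eq_zero hmax hγ]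

theorem forall_pow_dvd_apply_iff_of_injective
    (hmax : IsLocalRing.maximalIdeal R = Ideal.span {γ}) (hγ : IsNilpotent γ) {ι κ : Type*}
    {f : (ι → R) →ₗ[R] κ → R} (hf : Function.Injective f) {j : ℕ} {x : ι → R} :
    (∀ t, γ ^ j ∣ f x t) ↔ ∀ i, γ ^ j ∣ x i := by
  simp only [forall_pow_dvd_iff_pow_nilpotencyClass_sub_smul_eq_zero hmax hγ, ← map_smul,
    map_eq_zero_iff f hf]

theorem stmt_4_general
    (hmax : IsLocalRing.maximalIdeal R = Ideal.span {γ}) (hγ : IsNilpotent γ)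
    {ι κ : Type*} [Fintype ι] {u : ι → κ → R} (hu : LinearIndependent R u) (α : ι → R) (j : ℕ) :
    (∀ t, (∑ i, α i • u i) t ∈ Ideal.span {γ ^ j}) ↔ ∀ i, α i ∈ Ideal.span {γ ^ j} := by
  simp only [Ideal.mem_span_singleton, ← Fintype.linearCombination_apply]
  exact forall_pow_dvd_apply_iff_of_injective hmax hγ (hu.fintypeLinearCombination_injective)

end ChainRing

/-- If `u_1, …, u_k ∈ R^n` generate a free code of rank `k`, then for every
nonzero `α ∈ R^k`, writing `j = min_i ν(α_i)` (expressed by: all `α_i ∈ ⟨γ^j⟩` and some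
`α_i ∉ ⟨γ^(j+1)⟩`), the codeword `c = ∑ α_i u_i` satisfies: every coordinate of `c` lies in
`⟨γ^j⟩` and some coordinate lies outside `⟨γ^(j+1)⟩`; that is, `ν(c) = min_i ν(α_i)`. -/
theorem stmt_4
    (R : Type) [CommRing R] [IsLocalRing R] [Fintype R]
    (γ : R) (s q : ℕ)
    (hs : 1 ≤ s)
    (hmax : IsLocalRing.maximalIdeal R = Ideal.span {γ})
    (hnil : γ ^ s = 0)
    (hnil' : 2 ≤ s → γ ^ (s - 1) ≠ 0)
    (hq : Nat.card (R ⧸ Ideal.span ({γ} : Set R)) = q)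
    (n k : ℕ) (hn : 1 ≤ n) (hk : 1 ≤ k)
    (u : Fin k → Fin n → R)
    (hfree : ∀ α : Fin k → R, (∑ i, α i • u i) = 0 → α = 0) :
    ∀ α : Fin k → R, α ≠ 0 → ∀ j : ℕ,
      ((∀ i, α i ∈ Ideal.span ({γ ^ j} : Set R)) ∧
        (∃ i, α i ∉ Ideal.span ({γ ^ (j + 1)} : Set R))) →
      ((∀ t, (∑ i, α i • u i) t ∈ Ideal.span ({γ ^ j} : Set R)) ∧
        (∃ t, (∑ i, α i • u i) t ∉ Ideal.span ({γ ^ (j + 1)} : Set R))) := by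
  have mem_iff := stmt_4_general hmax ⟨s, hnil⟩
    (Fintype.linearIndependent_iff.2 fun α hα => congrFun (hfree α hα))
  simp only [← not_forall, mem_iff]
  exact fun _ _ _ => id
end

section
/- Let k ≥ 1. For each j ∈ {0,…,s−1}, the number of x ∈ R^k whose codeword (x·v)_{v∈R^k} in S_k^α has Hamming weight exactly q^(sk) − q^(j+s(k−1)) equals q^(k(s−j)) − q^(k(s−j−1)), and the only x giving Hamming weight 0 is x = 0. (The weights q^(sk) − q^(j+s(k−1)) for j = 0, …, s−1 are pairwise distinct, and these counts sum to q^(sk) − 1, accounting for all nonzero codewords.) -/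
/-!
Over any finite commutative ring, `v ↦ x · v` maps `R^k` onto the ideal generated by the entries
of `x`, so the weight of the codeword of `x` depends only on the size of that ideal. In a chain
ring the ideals are `⟨γ ^ j⟩` with `j ≤ s`, of size `q ^ (s - j)`. Hence the weight identifies the
ideal, and the vectors whose entries generate `⟨γ ^ j⟩` are those with all entries in `⟨γ ^ j⟩` but
not all in `⟨γ ^ (j + 1)⟩`.
-/

theorem natCard_ker_mul_natCard_map {R M N : Type*} [Ring R] [AddCommGroup M] [Module R M]
    [AddCommGroup N] [Module R N] (f : M →ₗ[R] N) {p : Submodule R M}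
    (hp : LinearMap.ker f ≤ p) :
    Nat.card (LinearMap.ker f) * Nat.card (p.map f) = Nat.card p := by
  have h := AddSubgroup.relIndex_mul_relIndex ⊥ f.toAddMonoidHom.ker p.toAddSubgroup bot_le hp
  rwa [AddSubgroup.relIndex_bot_left, AddSubgroup.relIndex_bot_left,
    AddSubgroup.relIndex_ker] at h

theorem natCard_ker_mul_natCard_range {R M N : Type*} [Ring R] [AddCommGroup M] [Module R M]
    [AddCommGroup N] [Module R N] (f : M →ₗ[R] N) :
    Nat.card (LinearMap.ker f) * Nat.card (LinearMap.range f) = Nat.card M := by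
  rw [LinearMap.range_eq_map, natCard_ker_mul_natCard_map f le_top]
  exact Nat.card_congr Submodule.topEquiv.toEquiv

theorem sum_range_reflect_tsub {α : Type*} [AddCommMonoid α] [PartialOrder α] [Sub α] [OrderedSub α]
    [AddLeftMono α] [AddLeftReflectLE α] [ExistsAddOfLE α] {f : ℕ → α} (hf : Monotone f) (s : ℕ) :
    ∑ j ∈ Finset.range s, (f (s - j) - f (s - j - 1)) = f s - f 0 := by
  rw [← Finset.sum_range_tsub hf s, ← Finset.sum_range_reflect]
  refine Finset.sum_congr rfl fun j hj => ?_
  have hj := Finset.mem_range.1 hj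
  rw [show s - (s - 1 - j) = j + 1 by omega, Nat.add_sub_cancel]

section SimplexWeight

variable {R ι : Type*} [CommRing R] [Fintype ι]

/-- The Hamming weight of the codeword `(x · v)_v`, with `v` running over `R^ι`, of the linear
simplex α code. -/
noncomputable def simplexWeight (x : ι → R) : ℕ :=
  Nat.card {v : ι → R // ∑ i, x i * v i ≠ 0}

theorem eq_zero_of_simplexWeight_eq_zero [Finite R] {x : ι → R} (hx : simplexWeight x = 0) :
    x = 0 := by
  have hempty := Finite.card_eq_zero_iff.1 hx
  refine dotProduct_eq_zero x fun v => ?_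
  by_contra hv
  exact hempty.false ⟨v, hv⟩

theorem natCard_dotProduct_eq_zero_mul_natCard_span_range (x : ι → R) :
    Nat.card {v : ι → R // x ⬝ᵥ v = 0} * Nat.card (Ideal.span (Set.range x)) =
      Nat.card R ^ Fintype.card ι := by
  have hrange : LinearMap.range (dotProductBilin R R x) = Ideal.span (Set.range x) := by
    rw [Ideal.span, ← Fintype.range_linearCombination]
    congr 1
    ext v
    simp [dotProduct, Fintype.linearCombination_apply, mul_comm]
  rw [← Nat.card_eq_fintype_card, ← Nat.card_fun, ← hrange]
  exact natCard_ker_mul_natCard_range (dotProductBilin R R x)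

theorem simplexWeight_eq_natCard_pow_sub [Finite R] (x : ι → R) :
    simplexWeight x = Nat.card R ^ Fintype.card ι - Nat.card {v : ι → R // x ⬝ᵥ v = 0} := by
  rw [← Nat.card_eq_fintype_card, ← Nat.card_fun]
  exact Nat.eq_sub_of_add_eq' (Set.ncard_add_ncard_compl {v : ι → R | x ⬝ᵥ v = 0})

end SimplexWeight

theorem mul_eq_add_mul_sub_one (s : ℕ) {n : ℕ} (hn : n ≠ 0) : s * n = s + s * (n - 1) := by
  rw [← mul_one_add, Nat.add_sub_cancel' (Nat.one_le_iff_ne_zero.2 hn)]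

theorem pow_sub_pow_add_injOn {q : ℕ} (hq : 2 ≤ q) (s : ℕ) {n : ℕ} (hn : n ≠ 0) :
    Set.InjOn (fun j => q ^ (s * n) - q ^ (j + s * (n - 1))) (Set.Iic s) := by
  have hle : ∀ j ≤ s, q ^ (j + s * (n - 1)) ≤ q ^ (s * n) := fun j hj => by
    rw [mul_eq_add_mul_sub_one s hn]
    gcongr
    omega
  intro i hi j hj hij
  have hpow := (tsub_right_inj (hle i hi) (hle j hj)).1 hij
  exact Nat.add_right_cancel (Nat.pow_right_injective hq hpow)

theorem span_pow_le_span_pow_iff {R : Type*} [CommRing R] {γ : R} {s : ℕ}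
    (hpow : ∀ m, γ ^ m = 0 ↔ s ≤ m) {i j : ℕ} (hj : j ≤ s) :
    Ideal.span {γ ^ i} ≤ Ideal.span {γ ^ j} ↔ j ≤ i := by
  rw [Ideal.span_singleton_le_span_singleton]
  refine ⟨fun ⟨c, hc⟩ => ?_, pow_dvd_pow γ⟩
  have hzero : γ ^ (i + (s - j)) = 0 := by
    rw [pow_add, hc, mul_right_comm, ← pow_add, Nat.add_sub_cancel' hj,
      (hpow s).2 le_rfl, zero_mul]
  have := (hpow _).1 hzero
  omega

open IsLocalRing

theorem isUnit_of_pow_mul_notMem {R : Type*} [CommRing R] [IsLocalRing R] {γ : R}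
    (hmax : maximalIdeal R = Ideal.span {γ}) {j : ℕ} {t : R}
    (h : γ ^ j * t ∉ Ideal.span {γ ^ (j + 1)}) : IsUnit t := by
  by_contra ht
  obtain ⟨c, rfl⟩ : γ ∣ t := by
    rwa [← Ideal.mem_span_singleton, ← hmax, mem_maximalIdeal]
  exact h (Ideal.mem_span_singleton.2 ⟨c, by ring⟩)

instance finite_residueField {R : Type*} [CommRing R] [IsLocalRing R] [Finite R] :
    Finite (ResidueField R) :=
  Finite.of_surjective _ residue_surjective

theorem natCard_ker_mulLeft_of_maximalIdeal_eq_span {R : Type*} [CommRing R]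
    [IsLocalRing R] [Finite R] {γ : R} (hmax : maximalIdeal R = Ideal.span {γ}) :
    Nat.card (LinearMap.ker (LinearMap.mulLeft R γ)) = Nat.card (ResidueField R) := by
  have hrange : LinearMap.range (LinearMap.mulLeft R γ) = maximalIdeal R := by
    rw [hmax]
    ext r
    simp [Ideal.mem_span_singleton, dvd_def, eq_comm]
  have hcard := natCard_ker_mul_natCard_range (LinearMap.mulLeft R γ)
  rw [hrange, Submodule.card_eq_card_quotient_mul_card (maximalIdeal R),
    mul_comm (Nat.card (maximalIdeal R))] at hcard
  exact Nat.eq_of_mul_eq_mul_right Nat.card_pos hcard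

/-- `γ` generates the maximal ideal of the local ring `R` and has nilpotency index `s`; such a `γ`
makes `R` a chain ring. -/
structure IsNilpotentUniformizer {R : Type*} [CommRing R] [IsLocalRing R] (γ : R) (s : ℕ) :
    Prop where
  maximalIdeal_eq : maximalIdeal R = Ideal.span {γ}
  pow_eq_zero_iff : ∀ m, γ ^ m = 0 ↔ s ≤ m

namespace IsNilpotentUniformizer

variable {R : Type*} [CommRing R] [IsLocalRing R] {γ : R} {s : ℕ}

theorem of_pow_sub_one_ne_zero (hmax : maximalIdeal R = Ideal.span {γ}) (hpow : γ ^ s = 0)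
    (hpow' : γ ^ (s - 1) ≠ 0) : IsNilpotentUniformizer γ s where
  maximalIdeal_eq := hmax
  pow_eq_zero_iff m := by
    refine ⟨fun h => ?_, fun h => pow_eq_zero_of_le h hpow⟩
    by_contra! hm
    exact hpow' (pow_eq_zero_of_le (Nat.le_sub_one_of_lt hm) h)

theorem exists_eq_span_pow (hγ : IsNilpotentUniformizer γ s) (I : Ideal R) :
    ∃ j ≤ s, I = Ideal.span {γ ^ j} := by
  classical
  let P : ℕ → Prop := fun j => I ≤ Ideal.span {γ ^ j}
  let j := Nat.findGreatest P s
  have hjs : j ≤ s := Nat.findGreatest_le s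
  have hle : I ≤ Ideal.span {γ ^ j} := Nat.findGreatest_spec (P := P) s.zero_le (by simp [P])
  refine ⟨j, hjs, hle.antisymm ?_⟩
  rcases hjs.eq_or_lt with hjs | hjs
  · simp [(hγ.pow_eq_zero_iff j).2 hjs.ge]
  obtain ⟨y, hyI, hy⟩ := SetLike.not_le_iff_exists.1
    (Nat.findGreatest_is_greatest (P := P) j.lt_succ_self hjs)
  obtain ⟨t, rfl⟩ := Ideal.mem_span_singleton.1 (hle hyI)
  have ht : IsUnit t := isUnit_of_pow_mul_notMem hγ.maximalIdeal_eq hy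
  exact (Ideal.span_singleton_le_iff_mem I).2 ((Ideal.mul_unit_mem_iff_mem I ht).1 hyI)

theorem eq_span_pow_iff (hγ : IsNilpotentUniformizer γ s) {I : Ideal R} {j : ℕ} (hj : j < s) :
    I = Ideal.span {γ ^ j} ↔ I ≤ Ideal.span {γ ^ j} ∧ ¬ I ≤ Ideal.span {γ ^ (j + 1)} := by
  obtain ⟨i, hi, rfl⟩ := hγ.exists_eq_span_pow I
  rw [le_antisymm_iff, span_pow_le_span_pow_iff hγ.pow_eq_zero_iff hj.le,
    span_pow_le_span_pow_iff hγ.pow_eq_zero_iff hi, span_pow_le_span_pow_iff hγ.pow_eq_zero_iff hj]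
  omega

theorem ker_mulLeft_le_span_pow (hγ : IsNilpotentUniformizer γ s) {j : ℕ} (hj : j < s) :
    LinearMap.ker (LinearMap.mulLeft R γ) ≤ Ideal.span {γ ^ j} := by
  obtain ⟨i, -, hi⟩ := hγ.exists_eq_span_pow (LinearMap.ker (LinearMap.mulLeft R γ))
  have hzero : γ ^ (i + 1) = 0 := by
    have : γ ^ i ∈ LinearMap.ker (LinearMap.mulLeft R γ) := hi ▸ Ideal.mem_span_singleton_self _
    rwa [pow_succ']
  have := (hγ.pow_eq_zero_iff _).1 hzero
  rw [hi, Ideal.span_singleton_le_span_singleton]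
  exact pow_dvd_pow γ (by omega)

section Finite

variable [Finite R]

theorem natCard_span_pow_eq_mul (hγ : IsNilpotentUniformizer γ s) {j : ℕ} (hj : j < s) :
    Nat.card (Ideal.span {γ ^ j}) =
      Nat.card (ResidueField R) * Nat.card (Ideal.span {γ ^ (j + 1)}) := by
  have hmap : Submodule.map (LinearMap.mulLeft R γ) (Ideal.span {γ ^ j}) =
      Ideal.span {γ ^ (j + 1)} := by
    rw [Ideal.span, Submodule.map_span, Set.image_singleton, LinearMap.mulLeft_apply, pow_succ']
  rw [← natCard_ker_mul_natCard_map _ (hγ.ker_mulLeft_le_span_pow hj), hmap,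
    natCard_ker_mulLeft_of_maximalIdeal_eq_span hγ.maximalIdeal_eq]

theorem natCard_span_pow (hγ : IsNilpotentUniformizer γ s) {j : ℕ} (hj : j ≤ s) :
    Nat.card (Ideal.span {γ ^ j}) = Nat.card (ResidueField R) ^ (s - j) := by
  induction hj using Nat.decreasingInduction with
  | self => simp [(hγ.pow_eq_zero_iff s).2 le_rfl]
  | of_succ j hj ih =>
    rw [hγ.natCard_span_pow_eq_mul hj, ih, ← pow_succ', Nat.sub_succ', Nat.sub_add_cancel]
    omega

theorem natCard_eq_pow (hγ : IsNilpotentUniformizer γ s) :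
    Nat.card R = Nat.card (ResidueField R) ^ s := by
  rw [← Nat.sub_zero s, ← hγ.natCard_span_pow s.zero_le, pow_zero, Ideal.span_singleton_one]
  exact (Nat.card_congr Submodule.topEquiv.toEquiv).symm

variable {ι : Type*} [Fintype ι]

theorem natCard_span_range_le (hγ : IsNilpotentUniformizer γ s) {j : ℕ} (hj : j ≤ s) :
    Nat.card {x : ι → R // Ideal.span (Set.range x) ≤ Ideal.span {γ ^ j}} =
      Nat.card (ResidueField R) ^ (Fintype.card ι * (s - j)) := by
  simp only [Ideal.span_le, Set.range_subset_iff, SetLike.mem_coe]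
  rw [Nat.card_congr (Equiv.subtypePiEquivPi (p := fun (_ : ι) r => r ∈ Ideal.span {γ ^ j})),
    mul_comm, pow_mul, ← hγ.natCard_span_pow hj, ← Nat.card_eq_fintype_card]
  exact Nat.card_fun

theorem natCard_span_range_eq (hγ : IsNilpotentUniformizer γ s) {j : ℕ} (hj : j < s) :
    Nat.card {x : ι → R // Ideal.span (Set.range x) = Ideal.span {γ ^ j}} =
      Nat.card (ResidueField R) ^ (Fintype.card ι * (s - j)) -
        Nat.card (ResidueField R) ^ (Fintype.card ι * (s - j - 1)) := by
  rw [Nat.sub_sub, ← hγ.natCard_span_range_le hj.le, ← hγ.natCard_span_range_le hj]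
  simp only [hγ.eq_span_pow_iff hj]
  have hle : Ideal.span {γ ^ (j + 1)} ≤ Ideal.span {γ ^ j} :=
    (span_pow_le_span_pow_iff hγ.pow_eq_zero_iff hj.le).2 j.le_succ
  exact Set.ncard_sdiff (s := {x : ι → R | Ideal.span (Set.range x) ≤ Ideal.span {γ ^ (j + 1)}})
    (t := {x | Ideal.span (Set.range x) ≤ Ideal.span {γ ^ j}}) fun _ hx => hx.trans hle

variable [Nonempty ι]

theorem natCard_dotProduct_eq_zero (hγ : IsNilpotentUniformizer γ s) {j : ℕ} (hj : j ≤ s)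
    {x : ι → R} (hx : Ideal.span (Set.range x) = Ideal.span {γ ^ j}) :
    Nat.card {v : ι → R // x ⬝ᵥ v = 0} =
      Nat.card (ResidueField R) ^ (j + s * (Fintype.card ι - 1)) := by
  have hexp : s * Fintype.card ι = j + s * (Fintype.card ι - 1) + (s - j) := by
    rw [mul_eq_add_mul_sub_one s Fintype.card_ne_zero]
    omega
  have hcard := natCard_dotProduct_eq_zero_mul_natCard_span_range x
  rw [hx, hγ.natCard_span_pow hj, hγ.natCard_eq_pow, ← pow_mul, hexp, pow_add _ _ (s - j)] at hcard
  exact Nat.eq_of_mul_eq_mul_right (pow_pos Nat.card_pos _) hcard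

theorem simplexWeight_eq (hγ : IsNilpotentUniformizer γ s) {j : ℕ} (hj : j ≤ s)
    {x : ι → R} (hx : Ideal.span (Set.range x) = Ideal.span {γ ^ j}) :
    simplexWeight x = Nat.card (ResidueField R) ^ (s * Fintype.card ι) -
      Nat.card (ResidueField R) ^ (j + s * (Fintype.card ι - 1)) := by
  rw [simplexWeight_eq_natCard_pow_sub, hγ.natCard_dotProduct_eq_zero hj hx, hγ.natCard_eq_pow,
    pow_mul]

theorem simplexWeight_eq_iff (hγ : IsNilpotentUniformizer γ s) {j : ℕ} (hj : j ≤ s) (x : ι → R) :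
    simplexWeight x = Nat.card (ResidueField R) ^ (s * Fintype.card ι) -
        Nat.card (ResidueField R) ^ (j + s * (Fintype.card ι - 1)) ↔
      Ideal.span (Set.range x) = Ideal.span {γ ^ j} := by
  refine ⟨fun h => ?_, hγ.simplexWeight_eq hj⟩
  obtain ⟨i, hi, hxi⟩ := hγ.exists_eq_span_pow (Ideal.span (Set.range x))
  rw [hγ.simplexWeight_eq hi hxi] at h
  rwa [← pow_sub_pow_add_injOn Finite.one_lt_card s Fintype.card_ne_zero hi hj h]

theorem natCard_simplexWeight_eq (hγ : IsNilpotentUniformizer γ s) {j : ℕ} (hj : j < s) :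
    Nat.card {x : ι → R // simplexWeight x = Nat.card (ResidueField R) ^ (s * Fintype.card ι) -
        Nat.card (ResidueField R) ^ (j + s * (Fintype.card ι - 1))} =
      Nat.card (ResidueField R) ^ (Fintype.card ι * (s - j)) -
        Nat.card (ResidueField R) ^ (Fintype.card ι * (s - j - 1)) := by
  simp only [hγ.simplexWeight_eq_iff hj.le, hγ.natCard_span_range_eq hj]

end Finite

end IsNilpotentUniformizer

/-- Hamming weight distribution of `S_k^α`: for each `j ∈ {0,…,s−1}` exactly
`q^(k(s−j)) − q^(k(s−j−1))` elements `x ∈ R^k` give codewords of Hamming weight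
`q^(sk) − q^(j+s(k−1))`; only `x = 0` gives weight `0`; these weights are pairwise distinct
and the counts sum to `q^(sk) − 1`. -/
theorem stmt_6
    (R : Type) [CommRing R] [IsLocalRing R] [Fintype R]
    (γ : R) (s q : ℕ)
    (hs : 1 ≤ s)
    (hmax : IsLocalRing.maximalIdeal R = Ideal.span {γ})
    (hnil : γ ^ s = 0)
    (hnil' : 2 ≤ s → γ ^ (s - 1) ≠ 0)
    (hq : Nat.card (R ⧸ Ideal.span ({γ} : Set R)) = q)
    (k : ℕ) (hk : 1 ≤ k) :
    (∀ j : ℕ, j < s →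
      Nat.card {x : Fin k → R //
          Nat.card {v : Fin k → R // ∑ i, x i * v i ≠ 0}
            = q ^ (s * k) - q ^ (j + s * (k - 1))}
        = q ^ (k * (s - j)) - q ^ (k * (s - j - 1))) ∧
    (∀ x : Fin k → R,
      Nat.card {v : Fin k → R // ∑ i, x i * v i ≠ 0} = 0 → x = 0) ∧
    (∀ j₁ : ℕ, j₁ < s → ∀ j₂ : ℕ, j₂ < s →
      q ^ (s * k) - q ^ (j₁ + s * (k - 1)) = q ^ (s * k) - q ^ (j₂ + s * (k - 1)) →
      j₁ = j₂) ∧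
    (∑ j ∈ Finset.range s, (q ^ (k * (s - j)) - q ^ (k * (s - j - 1)))
      = q ^ (s * k) - 1) := by
  have hpow : γ ^ (s - 1) ≠ 0 := by
    obtain rfl | hs₂ := hs.eq_or_lt
    · simp
    · exact hnil' hs₂
  have hγ : IsNilpotentUniformizer γ s := .of_pow_sub_one_ne_zero hmax hnil hpow
  obtain rfl : Nat.card (ResidueField R) = q := by rwa [← hmax] at hq
  have hq₂ : 2 ≤ Nat.card (ResidueField R) := Finite.one_lt_card
  have : NeZero k := ⟨Nat.one_le_iff_ne_zero.1 hk⟩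
  refine ⟨fun j hj => ?_, fun x => eq_zero_of_simplexWeight_eq_zero, fun j₁ h₁ j₂ h₂ h => ?_, ?_⟩
  · simpa only [simplexWeight, Fintype.card_fin] using hγ.natCard_simplexWeight_eq (ι := Fin k) hj
  · exact pow_sub_pow_add_injOn hq₂ s (NeZero.ne k) h₁.le h₂.le h
  · have hmono : Monotone fun n => Nat.card (ResidueField R) ^ (k * n) := fun m n h =>
      Nat.pow_le_pow_right Nat.card_pos (Nat.mul_le_mul_left k h)
    simpa only [mul_zero, pow_zero, mul_comm k s] using sum_range_reflect_tsub hmono s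
end

section
/- Let k ≥ 1 and let x ∈ R^k be nonzero. Then ∑_{v ∈ R^k} w_Hom(x·v) = (q−1)·q^(s(k+1)−2). In particular, all nonzero codewords of the linear simplex α code S_k^α have the same homogeneous weight, and the minimum homogeneous weight of S_k^α equals (q−1)·q^(s(k+1)−2). -/
-- The homogeneous weight on a finite chain ring `R` with maximal ideal `⟨γ⟩`, nilpotency
-- index `s` and residue field of cardinality `q`.
open Classical in
noncomputable def wHom {R : Type} [CommRing R] (γ : R) (s q : ℕ) (y : R) : ℕ :=
  if y = 0 then 0
  else if y ∈ Ideal.span ({γ ^ (s - 1)} : Set R) then q ^ (s - 1)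
  else (q - 1) * q ^ (s - 2)

/-!
Let `n = s - 1`, so that the socle `⟨γ ^ n⟩` of `R` has exactly `q` elements. Multiplied by `q`, the
homogeneous weight is a constant corrected by two indicator functions:
`q * w_Hom = (q - 1) * q ^ n + q ^ n * 1_{⟨γ ^ n⟩} - q ^ (n + 1) * 1_{0}`.
A nonzero linear functional `f : M → R` has the socle in its range, because the socle lies in every
nonzero ideal; hence `f` takes values in the socle `q` times as often as it vanishes, and the two
corrections cancel when `w_Hom ∘ f` is summed over `M`. What remains is `(q - 1) * q ^ n * |M|`, to
be applied to `v ↦ x · v` on `M = R ^ k`, where `|R| = q ^ s`.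
-/

open IsLocalRing

theorem card_comap_of_le_range {A B : Type*} [AddGroup A] [AddGroup B] (f : A →+ B)
    {N : AddSubgroup B} (hN : N ≤ f.range) :
    Nat.card (N.comap f) = Nat.card f.ker * Nat.card N := by
  have hker : f.ker ≤ N.comap f := AddSubgroup.ker_le_comap f N
  rw [← AddSubgroup.relIndex_bot_left (N.comap f),
    ← AddSubgroup.relIndex_mul_relIndex _ _ _ bot_le hker, AddSubgroup.relIndex_bot_left,
    AddSubgroup.relIndex_ker, AddSubgroup.map_comap_eq_self hN]

theorem sum_ite_const_zero {α M : Type*} [Fintype α] [AddCommMonoid M] (p : α → Prop)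
    [DecidablePred p] (c : M) : ∑ a, (if p a then c else 0) = Nat.card {a // p a} • c := by
  rw [← Finset.sum_filter, Finset.sum_const, Nat.card_eq_fintype_card, Fintype.card_subtype]

section PrincipalMaximalIdeal

variable {R : Type*} [CommRing R] [IsLocalRing R] {γ : R} {n : ℕ}

theorem isUnit_of_not_dvd (hmax : maximalIdeal R = Ideal.span {γ}) {u : R} (hu : ¬ γ ∣ u) :
    IsUnit u := by
  rwa [← Ideal.mem_span_singleton, ← hmax, notMem_maximalIdeal] at hu

theorem span_pow_le_of_ne_bot (hmax : maximalIdeal R = Ideal.span {γ}) (hnil : γ ^ (n + 1) = 0)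
    {I : Ideal R} (hI : I ≠ ⊥) : Ideal.span {γ ^ n} ≤ I := by
  obtain ⟨y, hyI, hy⟩ := I.ne_bot_iff.mp hI
  have hfin : FiniteMultiplicity γ y := ⟨n, by rwa [hnil, zero_dvd_iff]⟩
  obtain ⟨u, hyu, hu⟩ := hfin.exists_eq_pow_mul_and_not_dvd
  have hlt : multiplicity γ y < n + 1 := hfin.multiplicity_lt_iff_not_dvd.mpr <| by
    rwa [hnil, zero_dvd_iff]
  have hmem : γ ^ multiplicity γ y ∈ I :=
    (I.mul_unit_mem_iff_mem (isUnit_of_not_dvd hmax hu)).mp (hyu ▸ hyI)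
  rw [Ideal.span_singleton_le_iff_mem]
  exact I.mem_of_dvd (pow_dvd_pow γ (Nat.le_of_lt_succ hlt)) hmem

theorem pow_succ_dvd_pow_mul_iff (hmax : maximalIdeal R = Ideal.span {γ})
    (hnil : γ ^ (n + 1) = 0) (hne : γ ^ n ≠ 0) {j : ℕ} (hj : j ≤ n) {y : R} :
    γ ^ (j + 1) ∣ γ ^ j * y ↔ γ ∣ y := by
  refine ⟨fun h => ?_, fun h => pow_succ γ j ▸ mul_dvd_mul_left _ h⟩
  by_contra hy
  have hdvd : γ ^ (j + 1) ∣ γ ^ j := (isUnit_of_not_dvd hmax hy).dvd_mul_right.mp h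
  have hzero : γ ^ (n + 1) ∣ γ ^ n := by
    simpa only [← pow_add, ← add_assoc, Nat.sub_add_cancel hj]
      using mul_dvd_mul_left (γ ^ (n - j)) hdvd
  exact hne (zero_dvd_iff.mp (hnil ▸ hzero))

theorem relIndex_span_pow_succ (hmax : maximalIdeal R = Ideal.span {γ})
    (hnil : γ ^ (n + 1) = 0) (hne : γ ^ n ≠ 0) {j : ℕ} (hj : j ≤ n) :
    (Ideal.span {γ ^ (j + 1)}).toAddSubgroup.relIndex (Ideal.span {γ ^ j}).toAddSubgroup
      = Nat.card (ResidueField R) := by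
  have hrange : (AddMonoidHom.mulLeft (γ ^ j)).range = (Ideal.span {γ ^ j}).toAddSubgroup := by
    ext y
    simp [Ideal.mem_span_singleton, dvd_iff_exists_eq_mul_right, eq_comm]
  have hcomap : (Ideal.span {γ ^ (j + 1)}).toAddSubgroup.comap (AddMonoidHom.mulLeft (γ ^ j))
      = (maximalIdeal R).toAddSubgroup := by
    ext y
    simp [hmax, Ideal.mem_span_singleton, pow_succ_dvd_pow_mul_iff hmax hnil hne hj]
  rw [← hrange, ← AddSubgroup.index_comap, hcomap]
  rfl

theorem card_span_pow_eq_card_residueField (hmax : maximalIdeal R = Ideal.span {γ})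
    (hnil : γ ^ (n + 1) = 0) (hne : γ ^ n ≠ 0) :
    Nat.card (Ideal.span {γ ^ n}) = Nat.card (ResidueField R) := by
  rw [← relIndex_span_pow_succ hmax hnil hne le_rfl, hnil, Ideal.span_singleton_zero,
    Submodule.bot_toAddSubgroup, AddSubgroup.relIndex_bot_left]
  rfl

theorem index_span_pow (hmax : maximalIdeal R = Ideal.span {γ}) (hnil : γ ^ (n + 1) = 0)
    (hne : γ ^ n ≠ 0) {j : ℕ} (hj : j ≤ n + 1) :
    (Ideal.span {γ ^ j}).toAddSubgroup.index = Nat.card (ResidueField R) ^ j := by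
  induction j with
  | zero => simp [Ideal.span_singleton_one]
  | succ j ih =>
    have hle : (Ideal.span {γ ^ (j + 1)}).toAddSubgroup ≤ (Ideal.span {γ ^ j}).toAddSubgroup :=
      Ideal.span_singleton_le_span_singleton.mpr (pow_dvd_pow γ j.le_succ)
    rw [← AddSubgroup.relIndex_mul_index hle, ih (by omega),
      relIndex_span_pow_succ hmax hnil hne (by omega), pow_succ']

theorem card_eq_card_residueField_pow (hmax : maximalIdeal R = Ideal.span {γ})
    (hnil : γ ^ (n + 1) = 0) (hne : γ ^ n ≠ 0) :
    Nat.card R = Nat.card (ResidueField R) ^ (n + 1) := by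
  rw [← index_span_pow hmax hnil hne le_rfl, hnil, Ideal.span_singleton_zero,
    Submodule.bot_toAddSubgroup, AddSubgroup.index_bot]

end PrincipalMaximalIdeal

section HomogeneousWeight

variable {R : Type} [CommRing R] {γ : R} {n q : ℕ}

open Classical in
theorem mul_wHom_add_ite (hq : 0 < q) (y : R) :
    q * wHom γ (n + 1) q y + (if y = 0 then q ^ (n + 1) else 0)
      = (q - 1) * q ^ n + (if y ∈ Ideal.span {γ ^ n} then q ^ n else 0) := by
  obtain ⟨p, rfl⟩ : ∃ p, q = p + 1 := Nat.exists_eq_add_of_le' hq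
  rcases eq_or_ne y 0 with rfl | hy
  · simp only [wHom, ↓reduceIte, zero_mem, add_tsub_cancel_right]
    ring
  by_cases hmem : y ∈ Ideal.span {γ ^ n}
  · simp only [wHom, hy, hmem, ↓reduceIte, add_tsub_cancel_right]
    ring
  · cases n with
    | zero => simp at hmem
    | succ n =>
      simp only [wHom, hy, hmem, ↓reduceIte, add_tsub_cancel_right, Nat.reduceSubDiff]
      ring

variable [IsLocalRing R]

theorem mul_sum_wHom_apply (hmax : maximalIdeal R = Ideal.span {γ}) (hnil : γ ^ (n + 1) = 0)
    (hne : γ ^ n ≠ 0) (hq : Nat.card (ResidueField R) = q) {M : Type*} [AddCommGroup M]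
    [Module R M] [Fintype M] {f : M →ₗ[R] R} (hf : f ≠ 0) :
    q * ∑ m, wHom γ (n + 1) q (f m) = (q - 1) * q ^ n * Nat.card M := by
  classical
  have hsocle : Ideal.span {γ ^ n} ≤ LinearMap.range f :=
    span_pow_le_of_ne_bot hmax hnil (mt LinearMap.range_eq_bot.mp hf)
  have hcard : Nat.card {m // f m ∈ Ideal.span {γ ^ n}} = Nat.card {m // f m = 0} * q := by
    rw [← hq, ← card_span_pow_eq_card_residueField hmax hnil hne]
    exact card_comap_of_le_range f.toAddMonoidHom (N := (Ideal.span {γ ^ n}).toAddSubgroup) hsocle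
  have hq0 : 0 < q := by
    have : Nonempty {m // f m ∈ Ideal.span {γ ^ n}} := ⟨0, by simp⟩
    exact Nat.pos_of_mul_pos_left (hcard ▸ Nat.card_pos)
  have hsum := Fintype.sum_congr _ _ fun m => mul_wHom_add_ite (γ := γ) (n := n) hq0 (f m)
  rw [Finset.sum_add_distrib, Finset.sum_add_distrib, ← Finset.mul_sum, sum_ite_const_zero,
    sum_ite_const_zero, smul_eq_mul, smul_eq_mul, hcard, mul_assoc, ← pow_succ',
    Nat.add_right_cancel_iff] at hsum
  rw [hsum, Finset.sum_const, smul_eq_mul, Finset.card_univ, Nat.card_eq_fintype_card, mul_comm]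

theorem sum_wHom_dotProduct [Fintype R] (hmax : maximalIdeal R = Ideal.span {γ})
    (hnil : γ ^ (n + 1) = 0) (hne : γ ^ n ≠ 0) (hq : Nat.card (ResidueField R) = q)
    {ι : Type*} [Fintype ι] [DecidableEq ι] {x : ι → R} (hx : x ≠ 0) :
    ∑ v, wHom γ (n + 1) q (x ⬝ᵥ v)
      = (q - 1) * q ^ ((n + 1) * (Fintype.card ι + 1) - 2) := by
  have : Finite (ResidueField R) := Finite.of_surjective _ (residue_surjective (R := R))
  have hq0 : 0 < q := hq ▸ Nat.card_pos
  have hι : 0 < Fintype.card ι :=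
    let ⟨i, _⟩ := Function.ne_iff.mp hx
    Fintype.card_pos_iff.mpr ⟨i⟩
  have hf : dotProductEquiv R ι x ≠ 0 := (dotProductEquiv R ι).map_ne_zero_iff.mpr hx
  have hexp : n + (n + 1) * Fintype.card ι = (n + 1) * (Fintype.card ι + 1) - 2 + 1 := by
    have : 0 < (n + 1) * Fintype.card ι := by positivity
    rw [mul_add_one]
    omega
  apply Nat.eq_of_mul_eq_mul_left hq0
  calc q * ∑ v, wHom γ (n + 1) q (x ⬝ᵥ v)
      = (q - 1) * q ^ n * Nat.card (ι → R) := mul_sum_wHom_apply hmax hnil hne hq hf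
    _ = (q - 1) * q ^ (n + (n + 1) * Fintype.card ι) := by
        rw [Nat.card_fun, card_eq_card_residueField_pow hmax hnil hne, hq,
          Nat.card_eq_fintype_card, ← pow_mul, mul_assoc, ← pow_add]
    _ = q * ((q - 1) * q ^ ((n + 1) * (Fintype.card ι + 1) - 2)) := by
        rw [hexp, pow_succ', mul_left_comm]

end HomogeneousWeight

/-- For nonzero `x ∈ R^k`, the homogeneous weight of the corresponding codeword
of `S_k^α` is `(q−1)·q^(s(k+1)−2)`; in particular all nonzero codewords of `S_k^α` have the
same homogeneous weight and the minimum homogeneous weight of `S_k^α` is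
`(q−1)·q^(s(k+1)−2)`. -/
theorem stmt_7
    (R : Type) [CommRing R] [IsLocalRing R] [Fintype R]
    (γ : R) (s q : ℕ)
    (hs : 1 ≤ s)
    (hmax : IsLocalRing.maximalIdeal R = Ideal.span {γ})
    (hnil : γ ^ s = 0)
    (hnil' : 2 ≤ s → γ ^ (s - 1) ≠ 0)
    (hq : Nat.card (R ⧸ Ideal.span ({γ} : Set R)) = q)
    (k : ℕ) (hk : 1 ≤ k)
    (x : Fin k → R) (hx : x ≠ 0) :
    (∑ v : Fin k → R, wHom γ s q (∑ i, x i * v i) = (q - 1) * q ^ (s * (k + 1) - 2)) ∧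
    (∀ y : Fin k → R, y ≠ 0 →
      (q - 1) * q ^ (s * (k + 1) - 2) ≤ ∑ v : Fin k → R, wHom γ s q (∑ i, y i * v i)) ∧
    (∃ y : Fin k → R, y ≠ 0 ∧
      ∑ v : Fin k → R, wHom γ s q (∑ i, y i * v i) = (q - 1) * q ^ (s * (k + 1) - 2)) := by
  obtain ⟨n, rfl⟩ := Nat.exists_eq_add_of_le' hs
  have hne : γ ^ n ≠ 0 := by
    rcases n.eq_zero_or_pos with rfl | hn
    · simp
    · exact hnil' (by omega)
  have hresidue : Nat.card (ResidueField R) = q := by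
    rw [← hq, ← hmax]
    rfl
  have hweight (y : Fin k → R) (hy : y ≠ 0) :
      ∑ v : Fin k → R, wHom γ (n + 1) q (∑ i, y i * v i)
        = (q - 1) * q ^ ((n + 1) * (k + 1) - 2) := by
    simpa only [dotProduct, Fintype.card_fin] using sum_wHom_dotProduct hmax hnil hne hresidue hy
  exact ⟨hweight x hx, fun y hy => (hweight y hy).ge, x, hx, hweight x hx⟩
end

section
/- Let k ≥ 1 and let D ⊆ R^k be a β-column set. The map x ↦ (x·g)_{g∈D} from R^k to R^D is injective; consequently the linear simplex β code S_k^β is a free R-linear code of rank k, i.e. of type (L_β(k); k, 0, …, 0), and has exactly q^(sk) codewords. -/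
/-- A β-column set: a finite set `D ⊆ R^k` such that every `g ∈ D` has a unit coordinate,
and every vector of `R^k` with a unit coordinate is `u • g` for a unique unit `u` and a
unique `g ∈ D`. -/
def IsBetaColumnSet {R : Type} [CommRing R] {k : ℕ} (D : Finset (Fin k → R)) : Prop :=
  (∀ g ∈ D, ∃ i, IsUnit (g i)) ∧
  (∀ w : Fin k → R, (∃ i, IsUnit (w i)) →
    ∃! ug : Rˣ × (Fin k → R), ug.2 ∈ D ∧ w = (ug.1 : R) • ug.2)

/-!
A β-column set spans `R^k`: each standard basis vector has a unit coordinate, hence is a multiple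
of a member of `D`. A vector is determined by its dot products with a spanning set, so there are
`|R|^k` codewords.

To count `R`, filter it by the powers of the maximal ideal `𝔪`. As `𝔪` is principal, each nonzero
power `N = 𝔪^n` is cyclic, and Nakayama's lemma makes `N / 𝔪N` one-dimensional over the residue
field, so every step of the filtration contributes one factor `q`.
-/

theorem notMem_smul_span_singleton {R M : Type*} [CommRing R] [AddCommGroup M] [Module R M]
    {I : Ideal R} (hI : I ≤ Ideal.jacobson ⊥) {x : M} (hx : x ≠ 0) :
    x ∉ I • Submodule.span R {x} := by
  intro hmem
  have hspan : Submodule.span R {x} = ⊥ :=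
    Submodule.eq_bot_of_le_smul_of_le_jacobson_bot I _ (Submodule.fg_span_singleton x)
      ((Submodule.span_singleton_le_iff_mem x _).2 hmem) hI
  exact hx (Submodule.span_singleton_eq_bot.1 hspan)

section CyclicSubmodule

open IsLocalRing

variable {R M : Type*} [CommRing R] [IsLocalRing R] [AddCommGroup M] [Module R M]

theorem torsionOf_mkQ_maximalIdeal_smul_span_singleton {x : M} (hx : x ≠ 0) :
    Ideal.torsionOf R _ ((maximalIdeal R • Submodule.span R {x}).mkQ x) = maximalIdeal R := by
  have mem_torsionOf (a : R) :
      a ∈ Ideal.torsionOf R _ ((maximalIdeal R • Submodule.span R {x}).mkQ x) ↔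
        a • x ∈ maximalIdeal R • Submodule.span R {x} := by
    rw [Ideal.mem_torsionOf_iff, ← map_smul, Submodule.mkQ_apply, Submodule.Quotient.mk_eq_zero]
  refine ((maximalIdeal.isMaximal R).eq_of_le ?_ fun a ha => ?_).symm
  · rw [Ideal.ne_top_iff_one, mem_torsionOf, one_smul]
    exact notMem_smul_span_singleton (maximalIdeal_le_jacobson ⊥) hx
  · rw [mem_torsionOf]
    exact Submodule.smul_mem_smul ha (Submodule.mem_span_singleton_self x)

theorem card_quotient_maximalIdeal_smul {N : Submodule R M} (hN : N.IsPrincipal) (hN₀ : N ≠ ⊥) :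
    Nat.card (M ⧸ maximalIdeal R • N) = Nat.card (R ⧸ maximalIdeal R) * Nat.card (M ⧸ N) := by
  obtain ⟨x, rfl⟩ := hN
  have hx : x ≠ 0 := fun h => hN₀ (Submodule.span_singleton_eq_bot.2 h)
  have card_map_mkQ : Nat.card ((Submodule.span R {x}).map
      (maximalIdeal R • Submodule.span R {x}).mkQ) = Nat.card (R ⧸ maximalIdeal R) := by
    rw [Submodule.map_span, Set.image_singleton,
      ← Nat.card_congr (Ideal.quotTorsionOfEquivSpanSingleton R _ _).toEquiv,
      torsionOf_mkQ_maximalIdeal_smul_span_singleton hx]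
  rw [← Submodule.card_quotient_mul_card_quotient _ _ Submodule.smul_le_right, card_map_mkQ]

end CyclicSubmodule

section PrincipalMaximalIdeal

open IsLocalRing

variable {R : Type*} [CommRing R] [IsLocalRing R]

theorem card_quotient_maximalIdeal_pow_succ (hm : (maximalIdeal R).IsPrincipal) {n : ℕ}
    (hn : maximalIdeal R ^ n ≠ ⊥) :
    Nat.card (R ⧸ maximalIdeal R ^ (n + 1)) = Nat.card (R ⧸ maximalIdeal R) ^ (n + 1) := by
  induction n with
  | zero => rw [zero_add, pow_one, pow_one]
  | succ n ih =>
    have hn' : maximalIdeal R ^ n ≠ ⊥ :=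
      fun h => hn (le_bot_iff.1 (h ▸ Ideal.pow_le_pow_right n.le_succ))
    have hprincipal : (maximalIdeal R ^ (n + 1)).IsPrincipal := by
      obtain ⟨γ, hγ⟩ := hm
      exact ⟨γ ^ (n + 1), by rw [hγ, Ideal.submodule_span_eq, Ideal.span_singleton_pow]⟩
    rw [pow_succ' (maximalIdeal R), ← smul_eq_mul, card_quotient_maximalIdeal_smul hprincipal hn,
      ih hn', ← pow_succ']

theorem card_eq_card_quotient_maximalIdeal_pow_succ (hm : (maximalIdeal R).IsPrincipal) {n : ℕ}
    (hn : maximalIdeal R ^ n ≠ ⊥) (hn' : maximalIdeal R ^ (n + 1) = ⊥) :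
    Nat.card R = Nat.card (R ⧸ maximalIdeal R) ^ (n + 1) := by
  rw [← card_quotient_maximalIdeal_pow_succ hm hn, hn']
  exact Nat.card_congr (Submodule.quotEquivOfEqBot _ rfl).symm.toEquiv

end PrincipalMaximalIdeal

theorem dotProduct_injective_of_span_eq_top {R ι : Type*} [CommSemiring R] [Fintype ι]
    {s : Set (ι → R)} (hs : Submodule.span R s = ⊤) :
    Function.Injective fun (x : ι → R) (g : s) => x ⬝ᵥ g.1 := by
  intro x y hxy
  have hlin : dotProductBilin R R x = dotProductBilin R R y :=
    LinearMap.ext_on hs fun g hg => congrFun hxy ⟨g, hg⟩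
  exact dotProduct_eq x y fun w => LinearMap.congr_fun hlin w

theorem IsBetaColumnSet.span_eq_top {R : Type} [CommRing R] {k : ℕ} {D : Finset (Fin k → R)}
    (hD : IsBetaColumnSet D) : Submodule.span R (D : Set (Fin k → R)) = ⊤ := by
  rw [← top_le_iff, ← (Pi.basisFun R (Fin k)).span_eq, Submodule.span_le]
  rintro _ ⟨i, rfl⟩
  obtain ⟨⟨u, g⟩, ⟨hg, hug⟩, -⟩ := hD.2 (Pi.single i 1) ⟨i, by simp⟩
  rw [Pi.basisFun_apply, hug]
  exact Submodule.smul_mem _ _ (Submodule.subset_span hg)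

/-- The map `x ↦ (x·g)_{g∈D}` from `R^k` to `R^D` is injective; consequently
the linear simplex β code `S_k^β` is a free `R`-linear code of rank `k`
(type `(L_β(k); k, 0, …, 0)`) with exactly `q^(sk)` codewords. -/
theorem stmt_9
    (R : Type) [CommRing R] [IsLocalRing R] [Fintype R]
    (γ : R) (s q : ℕ)
    (hs : 1 ≤ s)
    (hmax : IsLocalRing.maximalIdeal R = Ideal.span {γ})
    (hnil : γ ^ s = 0)
    (hnil' : 2 ≤ s → γ ^ (s - 1) ≠ 0)
    (hq : Nat.card (R ⧸ Ideal.span ({γ} : Set R)) = q)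
    (k : ℕ) (hk : 1 ≤ k)
    (D : Finset (Fin k → R)) (hD : IsBetaColumnSet D) :
    Function.Injective
      (fun (x : Fin k → R) => (fun (g : {g : Fin k → R // g ∈ D}) => ∑ i, x i * g.1 i)) ∧
    Nat.card {c : {g : Fin k → R // g ∈ D} → R |
        ∃ x : Fin k → R, c = fun g => ∑ i, x i * g.1 i}
      = q ^ (s * k) := by
  have hinj : Function.Injective
      fun (x : Fin k → R) (g : {g : Fin k → R // g ∈ D}) => ∑ i, x i * g.1 i :=
    dotProduct_injective_of_span_eq_top hD.span_eq_top
  refine ⟨hinj, ?_⟩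
  obtain ⟨n, rfl⟩ := Nat.exists_eq_add_of_le' hs
  have hpow (j : ℕ) : IsLocalRing.maximalIdeal R ^ j = Ideal.span {γ ^ j} := by
    rw [hmax, Ideal.span_singleton_pow]
  have hγn : γ ^ n ≠ 0 := by
    rcases n with _ | n
    · simp
    · exact hnil' (by omega)
  have hcard : Nat.card R = q ^ (n + 1) := by
    rw [card_eq_card_quotient_maximalIdeal_pow_succ ⟨γ, hmax⟩ (n := n)
      (by simpa [hpow] using hγn) (by simp [hpow, hnil]), hmax, hq]
  have hrange : {c : {g : Fin k → R // g ∈ D} → R |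
      ∃ x : Fin k → R, c = fun g => ∑ i, x i * g.1 i} =
      Set.range fun (x : Fin k → R) (g : {g : Fin k → R // g ∈ D}) => ∑ i, x i * g.1 i :=
    Set.ext fun _ => exists_congr fun _ => eq_comm
  rw [hrange, Nat.card_range_of_injective hinj, Nat.card_fun, Nat.card_fin, hcard, pow_mul]
end

section
/- Let n ≥ 1, let c ∈ R^n, let m ≥ 1, and let λ ∈ R be nonzero with valuation ν(λ) = t. Assume that every element of ⟨γ⟩ occurs exactly m times among the coordinates of c (so the remaining n − q^(s−1)·m coordinates of c are units of R). Then every element of ⟨γ^(t+1)⟩ occurs exactly q^t·m times among the coordinates of λ·c, and each of the remaining coordinates of λ·c lies in ⟨γ^t⟩ \ ⟨γ^(t+1)⟩. -/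
/-!
Write `k` for the residue field. If `γ ^ t ≠ 0`, multiplication by `γ` maps the annihilator of
`γ ^ (t + 1)` onto that of `γ ^ t`. Its fibres are cosets of the annihilator of `γ`, which is
generated by the last nonzero power of `γ` and is therefore a copy of `k`. So the annihilator of a
nonzero `γ ^ t`, or of any element of valuation `t`, is equipotent with `k ^ t`. The solution set of
`r * x = b`, for `b ∈ ⟨γ ^ (t + 1)⟩` and `r` of valuation `t`, is a coset of this annihilator. It is
contained in `⟨γ⟩`, so all solutions occur equally often as coordinates.

Equipotence is expressed by bijections rather than by cardinalities, since `k` may be infinite.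
-/

open Ideal IsLocalRing

lemma nonempty_subtype_equiv_prod_of_fiber {α β F : Type*} (f : α → β) {p : α → Prop} {q : β → Prop}
    (hpq : ∀ a, p a ↔ q (f a)) (hF : ∀ b, q b → Nonempty ({a // f a = b} ≃ F)) :
    Nonempty ({a // p a} ≃ {b // q b} × F) :=
  ⟨(Equiv.sigmaSubtypeFiberEquivSubtype f hpq).symm.trans
    (Equiv.sigmaEquivProdOfEquiv fun b => (hF b b.2).some)⟩

lemma nonempty_mul_fiber_equiv_annihilator {R : Type*} [NonUnitalNonAssocRing R] (r x₀ : R) :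
    Nonempty ({x : R // r * x = r * x₀} ≃ {x : R // r * x = 0}) :=
  ⟨(AddMonoidHom.mulLeft r).fiberEquivKer x₀⟩

section IsLocalRing

variable {R : Type*} [CommRing R] [IsLocalRing R] {γ : R}

lemma not_isUnit_iff_dvd_of_maximalIdeal_eq_span (hmax : maximalIdeal R = span {γ}) {x : R} :
    ¬IsUnit x ↔ γ ∣ x := by
  rw [← mem_span_singleton, ← hmax, mem_maximalIdeal, mem_nonunits_iff]

lemma dvd_of_mul_eq_zero (hmax : maximalIdeal R = span {γ}) {r x : R} (hr : r ≠ 0)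
    (hrx : r * x = 0) : γ ∣ x :=
  (not_isUnit_iff_dvd_of_maximalIdeal_eq_span hmax).1 fun hx => hr (hx.mul_left_eq_zero.1 hrx)

lemma pow_mul_eq_zero_iff_pow_dvd (hmax : maximalIdeal R = span {γ}) (hγ : IsNilpotent γ) {i j : ℕ}
    (hij : i + j = nilpotencyClass γ) {x : R} : γ ^ i * x = 0 ↔ γ ^ j ∣ x := by
  refine ⟨fun hx => ?_, ?_⟩
  · suffices ∀ l ≤ j, γ ^ l ∣ x from this j le_rfl
    intro l hl
    induction l with
    | zero => simp
    | succ l ih =>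
      obtain ⟨y, rfl⟩ := ih (by lia)
      rw [← mul_assoc, ← pow_add] at hx
      rw [pow_succ]
      have hpow : γ ^ (i + l) ≠ 0 :=
        ne_zero_of_dvd_ne_zero (pow_pred_nilpotencyClass hγ) (pow_dvd_pow γ (by lia))
      exact mul_dvd_mul_left _ (dvd_of_mul_eq_zero hmax hpow hx)
  · rintro ⟨y, rfl⟩
    rw [← mul_assoc, ← pow_add, hij, pow_nilpotencyClass hγ, zero_mul]

lemma nonempty_annihilator_equiv_quotient (hmax : maximalIdeal R = span {γ}) (hγ : IsNilpotent γ) :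
    Nonempty ({x : R // γ * x = 0} ≃ R ⧸ span {γ}) := by
  obtain ⟨s, hs⟩ := Nat.exists_eq_add_one.2 (pos_nilpotencyClass_iff.2 hγ)
  let f : R →ₗ[R] R := LinearMap.mulLeft R (γ ^ s)
  have hker : LinearMap.ker f = span {γ} := by
    ext x
    simpa [f, mem_span_singleton] using pow_mul_eq_zero_iff_pow_dvd hmax hγ (j := 1) hs.symm
  have hrange (x : R) : x ∈ LinearMap.range f ↔ γ * x = 0 := by
    simpa [f, dvd_def, eq_comm] using
      (pow_mul_eq_zero_iff_pow_dvd hmax hγ (i := 1) (by rw [hs, add_comm]) (x := x)).symm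
  rw [← hker]
  exact ⟨(f.quotKerEquivRange.toEquiv.trans (Equiv.subtypeEquivRight hrange)).symm⟩

lemma nonempty_annihilator_pow_equiv (hmax : maximalIdeal R = span {γ}) (hγ : IsNilpotent γ) {t : ℕ}
    (ht : γ ^ t ≠ 0) : Nonempty ({x : R // γ ^ t * x = 0} ≃ (Fin t → R ⧸ span {γ})) := by
  induction t with
  | zero =>
    simp only [pow_zero, one_mul]
    exact ⟨Equiv.ofUnique _ _⟩
  | succ t ih =>
    have ht' : γ ^ t ≠ 0 := ne_zero_of_dvd_ne_zero ht (pow_dvd_pow γ t.le_succ)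
    have fiber (y : R) (hy : γ ^ t * y = 0) :
        Nonempty ({x // γ * x = y} ≃ R ⧸ span {γ}) := by
      obtain ⟨x₀, rfl⟩ := dvd_of_mul_eq_zero hmax ht' hy
      obtain ⟨e⟩ := nonempty_mul_fiber_equiv_annihilator γ x₀
      exact (nonempty_annihilator_equiv_quotient hmax hγ).map e.trans
    obtain ⟨e⟩ := nonempty_subtype_equiv_prod_of_fiber (p := fun x => γ ^ (t + 1) * x = 0)
      (γ * ·) (fun x => by rw [pow_succ, mul_assoc]) fiber
    obtain ⟨e'⟩ := ih ht'
    exact ⟨e.trans <| (e'.prodCongr (Equiv.refl _)).trans (Fin.succFunEquiv _ t).symm⟩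

lemma associated_pow_of_mem_span_pow_of_notMem_succ (hmax : maximalIdeal R = span {γ}) {r : R}
    {t : ℕ} (hr : r ∈ span {γ ^ t}) (hr' : r ∉ span {γ ^ (t + 1)}) : Associated (γ ^ t) r := by
  obtain ⟨u, rfl⟩ := mem_span_singleton.1 hr
  refine associated_mul_unit_right _ u ?_
  by_contra hu
  rw [not_isUnit_iff_dvd_of_maximalIdeal_eq_span hmax] at hu
  exact hr' (mem_span_singleton.2 (pow_succ γ t ▸ mul_dvd_mul_left _ hu))

lemma mem_span_of_mul_mem_span_pow_succ (hmax : maximalIdeal R = span {γ}) {r x : R} {t : ℕ}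
    (hr : r ∉ span {γ ^ (t + 1)}) (hrx : r * x ∈ span {γ ^ (t + 1)}) : x ∈ span {γ} := by
  rw [mem_span_singleton, ← not_isUnit_iff_dvd_of_maximalIdeal_eq_span hmax]
  exact fun hx => hr ((mul_unit_mem_iff_mem _ hx).1 hrx)

lemma nonempty_mul_fiber_equiv (hmax : maximalIdeal R = span {γ}) (hγ : IsNilpotent γ) {r b : R}
    {t : ℕ} (hr : r ∈ span {γ ^ t}) (hr' : r ∉ span {γ ^ (t + 1)}) (hb : b ∈ span {γ ^ t}) :
    Nonempty ({x // r * x = b} ≃ (Fin t → R ⧸ span {γ})) := by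
  have hassoc : Associated (γ ^ t) r := associated_pow_of_mem_span_pow_of_notMem_succ hmax hr hr'
  have ht : γ ^ t ≠ 0 := hassoc.ne_zero_iff.2 fun h => hr' (h ▸ zero_mem _)
  obtain ⟨x₀, rfl⟩ : r ∣ b := hassoc.dvd_iff_dvd_left.1 (mem_span_singleton.1 hb)
  obtain ⟨e⟩ := nonempty_mul_fiber_equiv_annihilator r x₀
  have hann (x : R) : r * x = 0 ↔ γ ^ t * x = 0 := (hassoc.mul_right x).eq_zero_iff.symm
  exact (nonempty_annihilator_pow_equiv hmax hγ ht).map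
    (e.trans (Equiv.subtypeEquivRight hann)).trans

end IsLocalRing

/-- `F` stands for the multiplicity `m`, and `Fin t → R ⧸ span {γ}` for `q ^ t`. -/
theorem stmt_10_general {R ι F : Type*} [CommRing R] [IsLocalRing R] {γ : R}
    (hmax : maximalIdeal R = span {γ}) (hγ : IsNilpotent γ) (c : ι → R) {lam : R} {t : ℕ}
    (ht1 : lam ∈ span {γ ^ t}) (ht2 : lam ∉ span {γ ^ (t + 1)})
    (hc : ∀ a ∈ span {γ}, Nonempty ({i // c i = a} ≃ F)) :
    (∀ b ∈ span {γ ^ (t + 1)},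
      Nonempty ({i // lam * c i = b} ≃ (Fin t → R ⧸ span {γ}) × F)) ∧
    (∀ i, lam * c i ∉ span {γ ^ (t + 1)} → lam * c i ∈ span {γ ^ t}) := by
  refine ⟨fun b hb => ?_, fun i _ => mul_mem_right _ _ ht1⟩
  have hb' : b ∈ span {γ ^ t} :=
    mem_span_singleton.2 ((pow_dvd_pow γ t.le_succ).trans (mem_span_singleton.1 hb))
  obtain ⟨e⟩ := nonempty_mul_fiber_equiv hmax hγ ht1 ht2 hb'
  obtain ⟨e'⟩ := nonempty_subtype_equiv_prod_of_fiber (q := (lam * · = b)) c (fun _ => Iff.rfl)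
    fun x hx => hc x (mem_span_of_mul_mem_span_pow_succ hmax ht2 (hx ▸ hb))
  exact ⟨e'.trans (e.prodCongr (Equiv.refl F))⟩

/-- Let `c ∈ R^n`, `m ≥ 1`, and let `λ ∈ R` be nonzero with valuation
`ν(λ) = t`. If every element of `⟨γ⟩` occurs exactly `m` times among the coordinates of `c`,
then every element of `⟨γ^(t+1)⟩` occurs exactly `q^t·m` times among the coordinates of
`λ·c`, and each remaining coordinate of `λ·c` lies in `⟨γ^t⟩ \ ⟨γ^(t+1)⟩`. -/
theorem stmt_10
    (R : Type) [CommRing R] [IsLocalRing R] [Fintype R]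
    (γ : R) (s q : ℕ)
    (hs : 1 ≤ s)
    (hmax : IsLocalRing.maximalIdeal R = Ideal.span {γ})
    (hnil : γ ^ s = 0)
    (hnil' : 2 ≤ s → γ ^ (s - 1) ≠ 0)
    (hq : Nat.card (R ⧸ Ideal.span ({γ} : Set R)) = q)
    (n : ℕ) (hn : 1 ≤ n) (c : Fin n → R)
    (m : ℕ) (hm : 1 ≤ m)
    (lam : R) (hlam : lam ≠ 0) (t : ℕ)
    (ht1 : lam ∈ Ideal.span ({γ ^ t} : Set R))
    (ht2 : lam ∉ Ideal.span ({γ ^ (t + 1)} : Set R))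
    (hc : ∀ a ∈ Ideal.span ({γ} : Set R), Nat.card {i : Fin n // c i = a} = m) :
    (∀ b ∈ Ideal.span ({γ ^ (t + 1)} : Set R),
      Nat.card {i : Fin n // lam * c i = b} = q ^ t * m) ∧
    (∀ i : Fin n, lam * c i ∉ Ideal.span ({γ ^ (t + 1)} : Set R) →
      lam * c i ∈ Ideal.span ({γ ^ t} : Set R)) := by
  obtain ⟨hcard, hmem⟩ := stmt_10_general hmax ⟨s, hnil⟩ c ht1 ht2
    fun a ha => ⟨Finite.equivFinOfCardEq (hc a ha)⟩
  refine ⟨fun b hb => ?_, hmem⟩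
  rw [Nat.card_congr (hcard b hb).some, Nat.card_prod, Nat.card_fun, hq, Nat.card_fin, Nat.card_fin]
end

section
/- Let k ≥ 2, let D ⊆ R^k be a β-column set, and let x ∈ R^k be nonzero with valuation ν(x) = t. Then the Hamming weight of the codeword (x·g)_{g∈D} of S_k^β, i.e. the number of g ∈ D with x·g ≠ 0, equals L_β(k) − q^t·L_β(k−1). -/
/-- `L_β(j) = q^((s−1)(j−1))·(q^j − 1)/(q − 1)`, written via the geometric sum. -/
def Lbeta (q s j : ℕ) : ℕ := q ^ ((s - 1) * (j - 1)) * ∑ i ∈ Finset.range j, q ^ i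

/-!
Write `𝔪` for the maximal ideal and `s` for its nilpotency class. A nonzero principal ideal `I` has
`q * |𝔪 * I|` elements, so `|𝔪 ^ j| = q ^ (s - j)` for all `j`. If `x` has valuation `t`, its
coordinates generate `𝔪 ^ t`, so `w ↦ x ⬝ᵥ w` maps the vectors over `𝔪 ^ j` onto `𝔪 ^ (j + t)`, with
a kernel of `q ^ t * |𝔪 ^ j| ^ (k - 1)` elements. Subtracting the case `j = 1` from `j = 0` leaves
`q ^ t * (|R| ^ (k - 1) - |𝔪| ^ (k - 1))` zeros of the form among the vectors with a unit
coordinate. Each column represents `|Rˣ|` of these, and `|Rˣ| * L_β(j) = |R| ^ j - |𝔪| ^ j`.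
-/

section Counting

theorem card_subtype_and_add_card_subtype_and_not {α : Type*} [Finite α] (p r : α → Prop) :
    Nat.card {a // p a ∧ r a} + Nat.card {a // p a ∧ ¬r a} = Nat.card {a // p a} := by
  classical
  rw [← Nat.card_sum, ← Nat.card_congr (Equiv.sumCompl fun a : {a // p a} => r a)]
  exact Nat.card_congr (Equiv.sumCongr (Equiv.subtypeSubtypeEquivSubtypeInter p r)
    (Equiv.subtypeSubtypeEquivSubtypeInter p (¬r ·))).symm

theorem card_forall_mem {ι α S : Type*} [Finite ι] [SetLike S α] (J : S) :
    Nat.card {w : ι → α // ∀ i, w i ∈ J} = Nat.card J ^ Nat.card ι := by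
  rw [← Nat.card_fun]
  exact Nat.card_congr Equiv.subtypePiEquivPi

theorem card_inf_ker_mul_card_map {R M N : Type*} [Ring R] [AddCommGroup M] [Module R M]
    [AddCommGroup N] [Module R N] (P : Submodule R M) (f : M →ₗ[R] N) :
    Nat.card (P ⊓ LinearMap.ker f : Submodule R M) * Nat.card (P.map f) = Nat.card P := by
  have h := AddSubgroup.relIndex_mul_relIndex ⊥
    (P.toAddSubgroup ⊓ f.toAddMonoidHom.ker) P.toAddSubgroup bot_le inf_le_left
  rwa [AddSubgroup.inf_relIndex_left, AddSubgroup.relIndex_ker, AddSubgroup.relIndex_bot_left,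
    AddSubgroup.relIndex_bot_left] at h

end Counting

section DotProduct

variable {R ι : Type*} [CommRing R] [Fintype ι]

theorem map_dotProductBilin_pi (J : Ideal R) (x : ι → R) :
    (Submodule.pi Set.univ fun _ => J).map (dotProductBilin R R x)
      = J * Ideal.span (Set.range x) := by
  ext a
  rw [← smul_eq_mul, Ideal.span, Submodule.mem_ideal_smul_span_iff_exists_sum,
    Finsupp.equivFunOnFinite.exists_congr_left]
  simp [Finsupp.sum_fintype, dotProduct, mul_comm]

theorem card_dotProduct_eq_zero_mul_card (J : Ideal R) (x : ι → R) :
    Nat.card {w : ι → R // (∀ i, w i ∈ J) ∧ x ⬝ᵥ w = 0}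
        * Nat.card (J * Ideal.span (Set.range x) : Ideal R)
      = Nat.card J ^ Nat.card ι := by
  have h := card_inf_ker_mul_card_map (Submodule.pi Set.univ fun _ => J) (dotProductBilin R R x)
  rw [map_dotProductBilin_pi] at h
  rw [← card_forall_mem]
  simpa using h

end DotProduct

section LocalRing

open IsLocalRing

variable {R : Type*} [CommRing R] [IsLocalRing R]

theorem span_range_eq_of_notMem_maximalIdeal_mul {ι : Type*} {I : Ideal R} [I.IsPrincipal]
    {x : ι → R} (hmem : ∀ i, x i ∈ I) (hnotMem : ∃ i, x i ∉ maximalIdeal R * I) :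
    Ideal.span (Set.range x) = I := by
  refine le_antisymm (Ideal.span_le.mpr (Set.range_subset_iff.mpr hmem)) ?_
  obtain ⟨i, hi⟩ := hnotMem
  obtain ⟨c, hc⟩ := (Submodule.IsPrincipal.mem_iff_eq_smul_generator I).mp (hmem i)
  have hunit : IsUnit c := by
    by_contra hc'
    exact hi (hc ▸ Ideal.mul_mem_mul ((mem_maximalIdeal c).mpr hc')
      (Submodule.IsPrincipal.generator_mem I))
  rw [← Ideal.span_singleton_generator I,
    ← Ideal.span_singleton_mul_left_unit hunit, ← smul_eq_mul, ← hc]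
  exact Ideal.span_mono (Set.singleton_subset_iff.mpr (Set.mem_range_self i))

variable [Finite R]

theorem card_units_add_card_maximalIdeal :
    Nat.card Rˣ + Nat.card (maximalIdeal R) = Nat.card R := by
  classical
  rw [Nat.card_congr Submonoid.unitsTypeEquivIsUnitSubmonoid.toEquiv, ← Nat.card_sum]
  exact Nat.card_congr (Equiv.sumCompl (IsUnit : R → Prop))

theorem card_exists_isUnit_add_card_forall_mem_maximalIdeal {ι : Type*} [Finite ι]
    (P : (ι → R) → Prop) :
    Nat.card {w : ι → R // (∃ i, IsUnit (w i)) ∧ P w}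
        + Nat.card {w : ι → R // (∀ i, w i ∈ maximalIdeal R) ∧ P w}
      = Nat.card {w : ι → R // P w} := by
  simpa [and_comm] using
    card_subtype_and_add_card_subtype_and_not P fun w => ∃ i, IsUnit (w i)

theorem card_eq_card_residueField_mul_card_maximalIdeal_mul {I : Ideal R} [I.IsPrincipal]
    (hI : I ≠ ⊥) :
    Nat.card I = Nat.card (ResidueField R) * Nat.card (maximalIdeal R * I : Ideal R) := by
  obtain ⟨a, ha⟩ := ‹I.IsPrincipal›
  let f := LinearMap.toSpanSingleton R R a
  have hmap (J : Ideal R) : Submodule.map f J = J * I := by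
    ext b
    rw [ha]
    exact Ideal.mem_mul_span_singleton.symm
  have hker : f.ker ≤ maximalIdeal R := by
    intro b (hb : b * a = 0) hunit
    exact hI (by rw [ha, hunit.mul_right_eq_zero.mp hb, Submodule.span_zero_singleton])
  have hker_mul_card : Nat.card f.ker * Nat.card I = Nat.card R := by
    have h := card_inf_ker_mul_card_map ⊤ f
    rwa [hmap, top_inf_eq, Ideal.top_mul, Nat.card_congr Submodule.topEquiv.toEquiv] at h
  have hker_mul_card_mul :
      Nat.card f.ker * Nat.card (maximalIdeal R * I : Ideal R) = Nat.card (maximalIdeal R) := by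
    rw [← card_inf_ker_mul_card_map (maximalIdeal R) f, hmap, inf_eq_right.mpr hker]
  have hresidue : Nat.card R = Nat.card (maximalIdeal R) * Nat.card (ResidueField R) :=
    Submodule.card_eq_card_quotient_mul_card (maximalIdeal R)
  refine Nat.eq_of_mul_eq_mul_left (Nat.card_pos (α := f.ker)) ?_
  rw [hker_mul_card, hresidue, ← hker_mul_card_mul]
  ring

end LocalRing

section ChainRing

open IsLocalRing

variable {R : Type*} [CommRing R]

theorem nilpotencyClass_span_singleton (a : R) :
    nilpotencyClass (Ideal.span {a}) = nilpotencyClass a := by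
  simp [nilpotencyClass, Ideal.span_singleton_pow]

instance isPrincipal_ideal_pow (I : Ideal R) [I.IsPrincipal] (n : ℕ) : (I ^ n).IsPrincipal := by
  rw [← Ideal.span_singleton_generator I, Ideal.span_singleton_pow]
  infer_instance

variable [IsLocalRing R]

theorem isNilpotent_maximalIdeal [IsArtinianRing R] : IsNilpotent (maximalIdeal R) :=
  (isArtinianRing_iff_isNilpotent_maximalIdeal R).mp inferInstance

theorem lt_nilpotencyClass_of_mem_pow_of_notMem_pow_succ [IsArtinianRing R] {a : R} {t : ℕ}
    (hmem : a ∈ maximalIdeal R ^ t) (hnotMem : a ∉ maximalIdeal R ^ (t + 1)) :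
    t < nilpotencyClass (maximalIdeal R) := by
  by_contra! h
  rw [pow_eq_zero_of_le h (pow_nilpotencyClass isNilpotent_maximalIdeal)] at hmem
  exact hnotMem (hmem ▸ zero_mem _)

variable [Finite R] [(maximalIdeal R).IsPrincipal]

theorem card_maximalIdeal_pow (j : ℕ) :
    Nat.card (maximalIdeal R ^ j : Ideal R)
      = Nat.card (ResidueField R) ^ (nilpotencyClass (maximalIdeal R) - j) := by
  induction h : nilpotencyClass (maximalIdeal R) - j generalizing j with
  | zero =>
    rw [pow_eq_zero_of_le (Nat.sub_eq_zero_iff_le.mp h)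
      (pow_nilpotencyClass isNilpotent_maximalIdeal)]
    simp
  | succ d ih =>
    have hpow : maximalIdeal R ^ j ≠ ⊥ :=
      Nat.notMem_of_lt_sInf (s := {k | maximalIdeal R ^ k = 0}) (Nat.lt_of_sub_eq_succ h)
    rw [card_eq_card_residueField_mul_card_maximalIdeal_mul hpow, ← pow_succ',
      ih (j + 1) (by omega), pow_succ']

theorem card_maximalIdeal_pow_dotProduct_eq_zero {ι : Type*} [Fintype ι] [Nonempty ι]
    {j t : ℕ} (hjt : j + t ≤ nilpotencyClass (maximalIdeal R)) {x : ι → R}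
    (hspan : Ideal.span (Set.range x) = maximalIdeal R ^ t) :
    Nat.card {w : ι → R // (∀ i, w i ∈ maximalIdeal R ^ j) ∧ x ⬝ᵥ w = 0}
      = Nat.card (ResidueField R) ^ t
        * Nat.card (maximalIdeal R ^ j : Ideal R) ^ (Nat.card ι - 1) := by
  have hcard : Nat.card (maximalIdeal R ^ j : Ideal R)
      = Nat.card (ResidueField R) ^ t * Nat.card (maximalIdeal R ^ (j + t) : Ideal R) := by
    rw [card_maximalIdeal_pow, card_maximalIdeal_pow, ← pow_add]
    congr 1
    omega
  refine Nat.eq_of_mul_eq_mul_right (Nat.card_pos (α := (maximalIdeal R ^ (j + t) : Ideal R))) ?_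
  have h := card_dotProduct_eq_zero_mul_card (maximalIdeal R ^ j) x
  rw [hspan, ← pow_add] at h
  rw [h, mul_right_comm, ← hcard, mul_pow_sub_one Nat.card_pos.ne']

end ChainRing

section BetaColumnSet

open IsLocalRing

variable {R : Type} [CommRing R] {k : ℕ} {D : Finset (Fin k → R)}

theorem IsBetaColumnSet.card_units_mul_card (hD : IsBetaColumnSet D) (P : (Fin k → R) → Prop)
    (hP : ∀ (u : Rˣ) w, P ((u : R) • w) ↔ P w) :
    Nat.card Rˣ * Nat.card {g : Fin k → R // g ∈ D ∧ P g}
      = Nat.card {w : Fin k → R // (∃ i, IsUnit (w i)) ∧ P w} := by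
  have hunit (u : Rˣ) {g : Fin k → R} (hg : g ∈ D) : ∃ i, IsUnit (((u : R) • g) i) := by
    obtain ⟨i, hi⟩ := hD.1 g hg
    exact ⟨i, u.isUnit.mul hi⟩
  rw [← Nat.card_prod]
  refine Nat.card_eq_of_bijective (fun a : Rˣ × {g : Fin k → R // g ∈ D ∧ P g} =>
    (⟨(a.1 : R) • a.2.1, hunit a.1 a.2.2.1, (hP _ _).mpr a.2.2.2⟩ :
      {w : Fin k → R // (∃ i, IsUnit (w i)) ∧ P w})) ⟨?_, ?_⟩
  · rintro ⟨u, g, hg, _⟩ ⟨v, h, hh, _⟩ huv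
    have huv' : (u : R) • g = (v : R) • h := congrArg Subtype.val huv
    obtain ⟨rfl, rfl⟩ := Prod.mk.inj <|
      (hD.2 _ (hunit u hg)).unique (y₁ := (u, g)) (y₂ := (v, h)) ⟨hg, rfl⟩ ⟨hh, huv'⟩
    rfl
  · rintro ⟨w, hw, hPw⟩
    obtain ⟨⟨u, g⟩, ⟨hg, rfl⟩, -⟩ := hD.2 w hw
    exact ⟨(u, ⟨g, hg, (hP _ _).mp hPw⟩), rfl⟩

theorem mul_Lbeta_add_pow {n q s : ℕ} (hs : 1 ≤ s) (hn : n + q ^ (s - 1) = q ^ s) (j : ℕ) :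
    n * Lbeta q s j + (q ^ (s - 1)) ^ j = (q ^ s) ^ j := by
  obtain ⟨s, rfl⟩ := Nat.exists_eq_add_of_le' hs
  obtain _ | j := j
  · simp [Lbeta]
  simp only [Lbeta, Nat.add_sub_cancel] at hn ⊢
  zify at hn ⊢
  have hfactor : (n : ℤ) = q ^ s * (q - 1) := by linear_combination hn
  rw [hfactor]
  linear_combination ((q : ℤ) ^ s) ^ (j + 1) * geom_sum_mul (q : ℤ) (j + 1)

variable [IsLocalRing R] [Finite R] [(maximalIdeal R).IsPrincipal]

theorem card_units_mul_Lbeta_add_card_maximalIdeal_pow (j : ℕ) :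
    Nat.card Rˣ * Lbeta (Nat.card (ResidueField R)) (nilpotencyClass (maximalIdeal R)) j
        + Nat.card (maximalIdeal R) ^ j
      = Nat.card R ^ j := by
  have hR := card_maximalIdeal_pow (R := R) 0
  have hmax := card_maximalIdeal_pow (R := R) 1
  rw [pow_zero, Ideal.one_eq_top, Nat.card_congr Submodule.topEquiv.toEquiv, Nat.sub_zero] at hR
  rw [pow_one] at hmax
  have hunits := card_units_add_card_maximalIdeal (R := R)
  rw [hR, hmax] at hunits ⊢
  exact mul_Lbeta_add_pow (pos_nilpotencyClass_iff.mpr isNilpotent_maximalIdeal) hunits j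

theorem IsBetaColumnSet.card_eq_Lbeta (hD : IsBetaColumnSet D) :
    D.card = Lbeta (Nat.card (ResidueField R)) (nilpotencyClass (maximalIdeal R)) k := by
  have hscale := hD.card_units_mul_card (fun _ => True) fun _ _ => Iff.rfl
  have hsplit := card_exists_isUnit_add_card_forall_mem_maximalIdeal (R := R) (ι := Fin k)
    fun _ => True
  have hL := card_units_mul_Lbeta_add_card_maximalIdeal_pow (R := R) k
  simp only [and_true, Nat.subtype_card D fun _ => Iff.rfl, card_forall_mem, Nat.card_fin,
    Nat.card_congr (Equiv.subtypeUnivEquiv fun _ => trivial), Nat.card_fun] at hscale hsplit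
  refine Nat.eq_of_mul_eq_mul_left (Nat.card_pos (α := Rˣ)) ?_
  lia

theorem IsBetaColumnSet.card_dotProduct_eq_zero (hD : IsBetaColumnSet D) {x : Fin k → R} {t : ℕ}
    (hmem : ∀ i, x i ∈ maximalIdeal R ^ t) (hnotMem : ∃ i, x i ∉ maximalIdeal R ^ (t + 1)) :
    Nat.card {g : Fin k → R // g ∈ D ∧ x ⬝ᵥ g = 0}
      = Nat.card (ResidueField R) ^ t
        * Lbeta (Nat.card (ResidueField R)) (nilpotencyClass (maximalIdeal R)) (k - 1) := by
  have : Nonempty (Fin k) := hnotMem.nonempty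
  have ht : t < nilpotencyClass (maximalIdeal R) := by
    obtain ⟨i, hi⟩ := hnotMem
    exact lt_nilpotencyClass_of_mem_pow_of_notMem_pow_succ (hmem i) hi
  have hspan : Ideal.span (Set.range x) = maximalIdeal R ^ t :=
    span_range_eq_of_notMem_maximalIdeal_mul hmem (by rwa [← pow_succ'])
  have hscale := hD.card_units_mul_card (x ⬝ᵥ · = 0) fun u w => by
    rw [dotProduct_smul, smul_eq_mul, Units.mul_right_eq_zero]
  have hsplit := card_exists_isUnit_add_card_forall_mem_maximalIdeal (x ⬝ᵥ · = 0)
  have hall := card_maximalIdeal_pow_dotProduct_eq_zero (j := 0) (by omega) hspan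
  have hmax := card_maximalIdeal_pow_dotProduct_eq_zero (j := 1) (by omega) hspan
  have hL := card_units_mul_Lbeta_add_card_maximalIdeal_pow (R := R) (k - 1)
  rw [pow_zero, Ideal.one_eq_top, Nat.card_congr Submodule.topEquiv.toEquiv] at hall
  simp only [pow_one, Submodule.mem_top, implies_true, true_and, Nat.card_fin] at hall hmax
  rw [← hscale, hall, hmax, ← hL, mul_add, Nat.add_right_cancel_iff, mul_left_comm] at hsplit
  exact Nat.eq_of_mul_eq_mul_left Nat.card_pos hsplit

end BetaColumnSet

/-- For `k ≥ 2`, a β-column set `D ⊆ R^k`, and nonzero `x ∈ R^k` with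
valuation `ν(x) = t`, the Hamming weight of the codeword `(x·g)_{g∈D}` of `S_k^β` equals
`L_β(k) − q^t·L_β(k−1)`. -/
theorem stmt_12
    (R : Type) [CommRing R] [IsLocalRing R] [Fintype R]
    (γ : R) (s q : ℕ)
    (hs : 1 ≤ s)
    (hmax : IsLocalRing.maximalIdeal R = Ideal.span {γ})
    (hnil : γ ^ s = 0)
    (hnil' : 2 ≤ s → γ ^ (s - 1) ≠ 0)
    (hq : Nat.card (R ⧸ Ideal.span ({γ} : Set R)) = q)
    (k : ℕ) (hk : 2 ≤ k)
    (D : Finset (Fin k → R)) (hD : IsBetaColumnSet D)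
    (x : Fin k → R) (hx : x ≠ 0) (t : ℕ)
    (hval1 : ∀ i, x i ∈ Ideal.span ({γ ^ t} : Set R))
    (hval2 : ∃ i, x i ∉ Ideal.span ({γ ^ (t + 1)} : Set R)) :
    Nat.card {g : Fin k → R // g ∈ D ∧ ∑ i, x i * g i ≠ 0}
      = Lbeta q s k - q ^ t * Lbeta q s (k - 1) := by
  rw [← hmax] at hq
  have : (IsLocalRing.maximalIdeal R).IsPrincipal := ⟨γ, hmax⟩
  have hclass : nilpotencyClass (IsLocalRing.maximalIdeal R) = s := by
    obtain ⟨s, rfl⟩ := Nat.exists_eq_add_of_le' hs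
    rw [hmax, nilpotencyClass_span_singleton, nilpotencyClass_eq_succ_iff]
    refine ⟨hnil, ?_⟩
    obtain _ | s := s
    · simp
    · exact hnil' (by omega)
  simp only [← Ideal.span_singleton_pow, ← hmax] at hval1 hval2
  have hzero : Nat.card {g : Fin k → R // g ∈ D ∧ ∑ i, x i * g i = 0}
      = q ^ t * Lbeta q s (k - 1) := by
    rw [← hq, ← hclass]
    exact hD.card_dotProduct_eq_zero hval1 hval2
  have hlength : Nat.card {g // g ∈ D} = Lbeta q s k := by
    rw [← hq, ← hclass, Nat.subtype_card D fun _ => Iff.rfl]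
    exact hD.card_eq_Lbeta
  have hsplit := card_subtype_and_add_card_subtype_and_not (· ∈ D) (fun g => ∑ i, x i * g i = 0)
  rw [← hlength, ← hzero, ← hsplit, Nat.add_sub_cancel_left]
end
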